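/- There exists a universal constant C > 0 such that the following holds for all positive integers n and d ≥ 2. Given symmetric matrices A_1, ..., A_n ∈ ℝ^{d×d}, let X = ∑_{i=1}^n g_i A_i where g_1, ..., g_n are i.i.d. standard Gaussian random variables. Then 𝔼[‖X‖_op] ≤ C · (σ(X) + (log d)^{3/2} · v(X)). -/

import Mathlib

open MeasureTheory ProbabilityTheory

/-- Operator norm (largest singular value) of a real matrix, as the norm of the
induced linear map between Euclidean spaces. -/
noncomputable def opNorm {m n : Type*} [Fintype m] [Fintype n] [DecidableEq n]
    (M : Matrix m n ℝ) : ℝ :=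
  ‖LinearMap.toContinuousLinearMap (Matrix.toEuclideanLin M)‖

/-- Squared Frobenius norm of a real matrix. -/
noncomputable def frobNormSq {m n : Type*} [Fintype m] [Fintype n]
    (M : Matrix m n ℝ) : ℝ := ∑ i, ∑ j, (M i j) ^ 2

/-- Product of `n` standard Gaussian measures on `ℝ`. -/
noncomputable def gaussianPi (n : ℕ) : Measure (Fin n → ℝ) :=
  Measure.pi fun _ => gaussianReal 0 1

/-- `σ(X)` for `X = ∑ g i • A i`: square root of the operator norm of `∑ A i ^ 2`. -/
noncomputable def sigmaX {n d : ℕ} (A : Fin n → Matrix (Fin d) (Fin d) ℝ) : ℝ :=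
  Real.sqrt (opNorm (∑ i, A i * A i))

/-- Covariance matrix `Cov(X) = ∑ vec(A i) vec(A i)ᵀ`, indexed by pairs of entries. -/
noncomputable def covX {n d : ℕ} (A : Fin n → Matrix (Fin d) (Fin d) ℝ) :
    Matrix (Fin d × Fin d) (Fin d × Fin d) ℝ :=
  ∑ i, Matrix.of fun p q => A i p.1 p.2 * A i q.1 q.2

/-- `v(X)`: square root of the operator norm of `Cov(X)`. -/
noncomputable def vX {n d : ℕ} (A : Fin n → Matrix (Fin d) (Fin d) ℝ) : ℝ :=
  Real.sqrt (opNorm (covX A))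

/-!
Compare `X` with the matrix `X ⊗ W = ∑ A i ⊗ W i`, where the `W i` are independent Wigner matrices
of large size `N`. In the rotation `cos θ • D + sin θ • (X ⊗ W)`, where `D` is block diagonal with
`N` independent copies of `X`, both ends have the same second moments `∑ A i * S * A i` against
matrices `S ⊗ 1`, and by invariance under signed permutations of the `N` coordinates the moments of
the rotated matrix are of the form `S ⊗ 1`. Gaussian integration by parts then leaves only crossing
terms in the derivative of `θ ↦ 𝔼 tr (·)ᵖ`, of order `p⁴ v² σ² 𝔼 tr (·)ᵖ⁻⁴`, and Grönwall's
inequality gives `𝔼 tr Xᵖ ≤ eᶜᵖ (𝔼 tr (X ⊗ W)ᵖ / N + d tᵖ)` for `t⁴ = p³ v² σ²`. As `N → ∞`, the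
parameter `v` of `X ⊗ W` tends to zero, crossings disappear and its even moments satisfy the Catalan
recursion, so that they are at most `(8 σ²)ᵖᐟ²` in norm. With `p` of order `log d` this gives
`𝔼 ‖X‖ ≤ C (σ + (log d)^{3/4} (v σ)^{1/2})`, and the arithmetic-geometric mean inequality concludes.
-/

namespace MatrixConcentration
open Matrix
open scoped Matrix.Norms.L2Operator

section MatrixNorms

variable {l m n : Type*} [Fintype l] [Fintype m] [Fintype n]

lemma opNorm_eq_norm [DecidableEq n] (M : Matrix m n ℝ) : opNorm M = ‖M‖ := rfl

lemma dotProduct_self_nonneg (x : n → ℝ) : 0 ≤ x ⬝ᵥ x :=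
  Finset.sum_nonneg fun _ _ => mul_self_nonneg _

lemma norm_toLp_sq (x : n → ℝ) : ‖WithLp.toLp 2 x‖ ^ 2 = x ⬝ᵥ x := by
  rw [EuclideanSpace.norm_sq_eq]
  exact Finset.sum_congr rfl fun i _ => by rw [Real.norm_eq_abs, sq_abs, sq]

lemma mulVec_dotProduct_self_le [DecidableEq n] (M : Matrix m n ℝ) (x : n → ℝ) :
    (M *ᵥ x) ⬝ᵥ (M *ᵥ x) ≤ ‖M‖ ^ 2 * (x ⬝ᵥ x) := by
  rw [← norm_toLp_sq, ← norm_toLp_sq, ← mul_pow]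
  exact pow_le_pow_left₀ (norm_nonneg _) (M.l2_opNorm_mulVec (WithLp.toLp 2 x)) 2

lemma norm_le_of_mulVec_dotProduct_self_le [DecidableEq n] {M : Matrix m n ℝ} {b : ℝ}
    (hb : 0 ≤ b) (h : ∀ x, (M *ᵥ x) ⬝ᵥ (M *ᵥ x) ≤ b ^ 2 * (x ⬝ᵥ x)) : ‖M‖ ≤ b := by
  refine ContinuousLinearMap.opNorm_le_bound _ hb fun x => ?_
  refine le_of_sq_le_sq ?_ (by positivity)
  rw [mul_pow]
  simpa only [← norm_toLp_sq] using! h x.ofLp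

lemma norm_le_of_abs_dotProduct_mulVec_le [DecidableEq n] {M : Matrix m n ℝ} {b : ℝ}
    (hb : 0 ≤ b) (h : ∀ y x, |y ⬝ᵥ (M *ᵥ x)| ≤ b * √(y ⬝ᵥ y) * √(x ⬝ᵥ x)) : ‖M‖ ≤ b := by
  refine norm_le_of_mulVec_dotProduct_self_le hb fun x => ?_
  set y := M *ᵥ x
  have hy : √(y ⬝ᵥ y) * √(y ⬝ᵥ y) ≤ b * √(x ⬝ᵥ x) * √(y ⬝ᵥ y) := by
    rw [Real.mul_self_sqrt (dotProduct_self_nonneg y), mul_right_comm]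
    exact (le_abs_self _).trans (h y x)
  have hy' : √(y ⬝ᵥ y) ≤ b * √(x ⬝ᵥ x) := by
    rcases (Real.sqrt_nonneg (y ⬝ᵥ y)).eq_or_lt with h0 | h0
    · rw [← h0]; positivity
    · exact le_of_mul_le_mul_right hy h0
  calc y ⬝ᵥ y = √(y ⬝ᵥ y) ^ 2 := (Real.sq_sqrt (dotProduct_self_nonneg y)).symm
    _ ≤ (b * √(x ⬝ᵥ x)) ^ 2 := pow_le_pow_left₀ (Real.sqrt_nonneg _) hy' 2
    _ = b ^ 2 * (x ⬝ᵥ x) := by rw [mul_pow, Real.sq_sqrt (dotProduct_self_nonneg x)]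

lemma norm_transpose [DecidableEq m] [DecidableEq n] (M : Matrix m n ℝ) : ‖Mᵀ‖ = ‖M‖ := by
  rw [← conjTranspose_eq_transpose_of_trivial, l2_opNorm_conjTranspose]

lemma norm_one_le [DecidableEq n] : ‖(1 : Matrix n n ℝ)‖ ≤ 1 := by
  rw [← diagonal_one, l2_opNorm_diagonal]
  exact (pi_norm_le_iff_of_nonneg zero_le_one).2 fun _ => by simp

lemma norm_le_one_of_transpose_mul_self [DecidableEq n] {U : Matrix m n ℝ} (hU : Uᵀ * U = 1) :
    ‖U‖ ≤ 1 := by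
  have h := l2_opNorm_conjTranspose_mul_self U
  rw [conjTranspose_eq_transpose_of_trivial, hU, ← sq] at h
  exact (sq_le_one_iff₀ (norm_nonneg U)).1 (h ▸ norm_one_le)

lemma norm_diag_entry_le [DecidableEq n] (M : Matrix n n ℝ) (i : n) : |M i i| ≤ ‖M‖ := by
  have h := mulVec_dotProduct_self_le M (Pi.single i 1)
  rw [single_dotProduct, Pi.single_eq_same, mul_one, mul_one, mulVec_single_one] at h
  refine abs_le_of_sq_le_sq (le_trans ?_ h) (norm_nonneg M)
  rw [sq]
  exact Finset.single_le_sum (f := fun k => M k i * M k i) (fun k _ => mul_self_nonneg _)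
    (Finset.mem_univ i)

lemma trace_le_card_mul_norm [DecidableEq n] (M : Matrix n n ℝ) :
    trace M ≤ Fintype.card n * ‖M‖ := by
  rw [trace, ← nsmul_eq_mul]
  exact Finset.sum_le_card_nsmul _ _ _ fun i _ => (le_abs_self _).trans (norm_diag_entry_le M i)

lemma frobNormSq_nonneg (M : Matrix m n ℝ) : 0 ≤ frobNormSq M :=
  Finset.sum_nonneg fun _ _ => Finset.sum_nonneg fun _ _ => sq_nonneg _

lemma frobNormSq_transpose (M : Matrix m n ℝ) : frobNormSq Mᵀ = frobNormSq M :=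
  Finset.sum_comm

lemma frobNormSq_mul_le_left [DecidableEq m] (A : Matrix l m ℝ) (B : Matrix m n ℝ) :
    frobNormSq (A * B) ≤ ‖A‖ ^ 2 * frobNormSq B := by
  rw [← frobNormSq_transpose, ← frobNormSq_transpose B, frobNormSq, frobNormSq, Finset.mul_sum]
  refine Finset.sum_le_sum fun j _ => ?_
  have h := mulVec_dotProduct_self_le A (B.col j)
  simp only [dotProduct, ← sq] at h
  exact h

lemma frobNormSq_mul_le_right [DecidableEq n] (A : Matrix l m ℝ) (B : Matrix m n ℝ) :
    frobNormSq (A * B) ≤ frobNormSq A * ‖B‖ ^ 2 := by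
  classical
  rw [← frobNormSq_transpose, transpose_mul, ← norm_transpose B, ← frobNormSq_transpose A, mul_comm]
  exact frobNormSq_mul_le_left Bᵀ Aᵀ

end MatrixNorms

section SymmetricMatrices

variable {n : Type*} [Fintype n] [DecidableEq n]

lemma exists_orthogonal_diagonalization {X : Matrix n n ℝ} (hX : X.IsSymm) :
    ∃ (U : Matrix n n ℝ) (w : n → ℝ), Uᵀ * U = 1 ∧
      ∀ k : ℕ, X ^ k = U * diagonal (fun a => w a ^ k) * Uᵀ := by
  have hH : X.IsHermitian := by rwa [IsHermitian, conjTranspose_eq_transpose_of_trivial]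
  have hstar (M : Matrix n n ℝ) : star M = Mᵀ := conjTranspose_eq_transpose_of_trivial M
  have hU := Unitary.coe_star_mul_self hH.eigenvectorUnitary
  refine ⟨hH.eigenvectorUnitary, hH.eigenvalues, hstar _ ▸ hU, fun k => ?_⟩
  conv_lhs => rw [hH.spectral_theorem, ← map_pow, diagonal_pow]
  rw [Unitary.conjStarAlgAut_apply, hstar]
  rfl

lemma exists_trace_pow_eq_sum {X : Matrix n n ℝ} (hX : X.IsSymm) :
    ∃ w : n → ℝ, ∀ k : ℕ, trace (X ^ k) = ∑ a, w a ^ k := by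
  obtain ⟨U, w, hU, hw⟩ := exists_orthogonal_diagonalization hX
  refine ⟨w, fun k => ?_⟩
  rw [hw, Matrix.mul_assoc, trace_mul_comm, Matrix.mul_assoc, hU, Matrix.mul_one, trace_diagonal]

lemma trace_pow_nonneg_of_even {X : Matrix n n ℝ} (hX : X.IsSymm) {k : ℕ} (hk : Even k) :
    0 ≤ trace (X ^ k) := by
  obtain ⟨w, hw⟩ := exists_trace_pow_eq_sum hX
  exact hw k ▸ Finset.sum_nonneg fun a _ => hk.pow_nonneg _

lemma norm_pow_le_trace_pow {X : Matrix n n ℝ} (hX : X.IsSymm) {k : ℕ} (hk : Even k)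
    (hk0 : k ≠ 0) : ‖X‖ ^ k ≤ trace (X ^ k) := by
  obtain ⟨U, w, hU, hw⟩ := exists_orthogonal_diagonalization hX
  have htr : trace (X ^ k) = ∑ a, w a ^ k := by
    rw [hw, Matrix.mul_assoc, trace_mul_comm, Matrix.mul_assoc, hU, Matrix.mul_one, trace_diagonal]
  have hU1 := norm_le_one_of_transpose_mul_self hU
  have hXw : ‖X‖ ≤ ‖w‖ := by
    have h := hw 1
    simp only [pow_one] at h
    calc ‖X‖ = ‖U * diagonal w * Uᵀ‖ := by rw [← h]
      _ ≤ ‖U‖ * ‖diagonal w‖ * ‖Uᵀ‖ :=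
        (l2_opNorm_mul _ _).trans (mul_le_mul_of_nonneg_right (l2_opNorm_mul _ _) (norm_nonneg _))
      _ ≤ 1 * ‖diagonal w‖ * 1 := by rw [norm_transpose]; gcongr
      _ = ‖w‖ := by rw [one_mul, mul_one, l2_opNorm_diagonal]
  rw [htr]
  rcases isEmpty_or_nonempty n with _ | _
  · rw [Subsingleton.elim X 0, norm_zero, zero_pow hk0, Finset.univ_eq_empty, Finset.sum_empty]
  obtain ⟨a, ha⟩ := Finite.exists_max fun a => ‖w a‖
  have hwa : ‖w‖ ≤ ‖w a‖ := (pi_norm_le_iff_of_nonneg (norm_nonneg _)).2 ha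
  calc ‖X‖ ^ k ≤ ‖w a‖ ^ k := pow_le_pow_left₀ (norm_nonneg _) (hXw.trans hwa) k
    _ = w a ^ k := by rw [Real.norm_eq_abs, hk.pow_abs]
    _ ≤ ∑ b, w b ^ k :=
      Finset.single_le_sum (fun b _ => hk.pow_nonneg (w b)) (Finset.mem_univ a)

lemma abs_prod_pow_le_sum_abs_pow {ι : Type*} [Fintype ι] [Nonempty ι] (x : ι → ℝ) (k : ι → ℕ) :
    |∏ i, x i ^ k i| ≤ ∑ i, |x i| ^ ∑ j, k j := by
  obtain ⟨i, hi⟩ := Finite.exists_max fun i => |x i|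
  calc |∏ j, x j ^ k j| = ∏ j, |x j| ^ k j := by simp only [Finset.abs_prod, abs_pow]
    _ ≤ ∏ j, |x i| ^ k j := Finset.prod_le_prod (fun j _ => by positivity)
        fun j _ => pow_le_pow_left₀ (abs_nonneg _) (hi j) _
    _ = |x i| ^ ∑ j, k j := Finset.prod_pow_eq_pow_sum _ _ _
    _ ≤ ∑ i, |x i| ^ ∑ j, k j :=
      Finset.single_le_sum (f := fun i => |x i| ^ ∑ j, k j) (fun j _ => by positivity)
        (Finset.mem_univ i)

end SymmetricMatrices

section GaussianMoments

lemma integrable_pow_gaussianReal (n : ℕ) : Integrable (fun x : ℝ => x ^ n) (gaussianReal 0 1) := by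
  have h := (memLp_id_gaussianReal (μ := 0) (v := 1) (n : NNReal)).integrable_norm_pow'
  refine Integrable.mono' (g := fun x : ℝ => ‖x‖ ^ n) (by simpa using h) (by fun_prop) ?_
  exact .of_forall fun x => (norm_pow x n).le

lemma hasDerivAt_gaussianPDFReal (x : ℝ) :
    HasDerivAt (gaussianPDFReal 0 1) (-(x * gaussianPDFReal 0 1 x)) x := by
  have hexp : HasDerivAt (fun y : ℝ => -(y - 0) ^ 2 / (2 * 1)) (-x) x := by
    refine (((hasDerivAt_id' x).sub_const 0).fun_pow 2).fun_neg.div_const (2 * 1) |>.congr_deriv ?_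
    ring
  exact (hexp.exp.const_mul (√(2 * Real.pi * 1))⁻¹).congr_deriv (by
    simp only [gaussianPDFReal, NNReal.coe_one]; ring)

lemma integral_id_mul_gaussianReal {f f' : ℝ → ℝ} (hf : ∀ x, HasDerivAt f (f' x) x)
    (hfi : Integrable f (gaussianReal 0 1)) (hfi' : Integrable f' (gaussianReal 0 1))
    (hxf : Integrable (fun x => x * f x) (gaussianReal 0 1)) :
    ∫ x, x * f x ∂(gaussianReal 0 1) = ∫ x, f' x ∂(gaussianReal 0 1) := by
  have hpdf {h : ℝ → ℝ} (hh : Integrable h (gaussianReal 0 1)) :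
      Integrable (fun x => gaussianPDFReal 0 1 x * h x) := by
    rw [gaussianReal_of_var_ne_zero _ one_ne_zero,
      integrable_withDensity_iff_integrable_smul₀' (by fun_prop) (by simp [gaussianPDF])] at hh
    simpa [toReal_gaussianPDF] using hh
  have hzero := integral_eq_zero_of_hasDerivAt_of_integrable
    (fun x => (hasDerivAt_gaussianPDFReal x).fun_mul (hf x))
    (((hpdf hfi').sub (hpdf hxf)).congr (.of_forall fun x => by dsimp only [Pi.sub_apply]; ring))
    (hpdf hfi)
  rw [integral_gaussianReal_eq_integral_smul one_ne_zero,
    integral_gaussianReal_eq_integral_smul one_ne_zero, ← sub_eq_zero]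
  simp only [smul_eq_mul]
  rw [← integral_sub (hpdf hxf) (hpdf hfi'), ← neg_eq_zero, ← integral_neg]
  refine (integral_congr_ae (.of_forall fun x => ?_)).trans hzero
  ring

lemma integral_pow_succ_gaussianReal (n : ℕ) :
    ∫ x, x ^ (n + 1) ∂(gaussianReal 0 1) = n * ∫ x, x ^ (n - 1) ∂(gaussianReal 0 1) := by
  rw [← integral_const_mul, ← integral_id_mul_gaussianReal (hasDerivAt_pow n)
    (integrable_pow_gaussianReal n) ((integrable_pow_gaussianReal _).const_mul _)
    (by simpa only [← pow_succ'] using integrable_pow_gaussianReal (n + 1))]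
  simp only [pow_succ']

end GaussianMoments

section GaussianProduct

variable {ι κ : Type*} [Fintype ι] [Fintype κ]

/-- The standard Gaussian measure on `κ → ℝ`; `gaussianPi n` is the case `κ = Fin n`. -/
noncomputable abbrev gaussianProduct (κ : Type*) [Fintype κ] : Measure (κ → ℝ) :=
  Measure.pi fun _ => gaussianReal 0 1

lemma measurePreserving_comp_injective {f : ι → κ} (hf : Function.Injective f) :
    MeasurePreserving (fun (g : κ → ℝ) i => g (f i)) (gaussianProduct κ) (gaussianProduct ι) := by
  refine ⟨by fun_prop, ?_⟩
  have h := (iIndepFun_pi (μ := fun _ : κ => gaussianReal 0 1) (X := fun _ x => x)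
    (fun _ => by fun_prop)).precomp hf
  rw [iIndepFun_iff_map_fun_eq_pi_map fun i => (measurable_pi_apply (f i)).aemeasurable] at h
  rw [h]
  congr 1
  ext1 i
  exact (measurePreserving_eval (μ := fun _ : κ => gaussianReal 0 1) (f i)).map_eq

lemma measurePreserving_mul_sign {s : κ → ℝ} (hs : ∀ k, s k = 1 ∨ s k = -1) :
    MeasurePreserving (fun (g : κ → ℝ) k => s k * g k) (gaussianProduct κ)
      (gaussianProduct κ) := by
  refine measurePreserving_pi (f := fun k x => s k * x) _ _ fun k => ⟨by fun_prop, ?_⟩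
  rw [gaussianReal_map_const_mul]
  rcases hs k with h | h <;> simp [h]

end GaussianProduct

section TrigPoly

variable {κ : Type*}

/-- Polynomials in the Gaussian variables `g k` (the variables `Sum.inl k`) and in the cosine and
the sine of an angle `θ` (the variables `Sum.inr false` and `Sum.inr true`). -/
abbrev TrigPoly (κ : Type*) := MvPolynomial (κ ⊕ Bool) ℝ

namespace TrigPoly

/-- Evaluation of a `TrigPoly` at the Gaussian vector `g` and the angle `θ`. -/
noncomputable def evalAt (θ : ℝ) (g : κ → ℝ) : TrigPoly κ →ₐ[ℝ] ℝ :=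
  MvPolynomial.aeval (Sum.elim g fun b => cond b (Real.sin θ) (Real.cos θ))

/-- The partial derivative in the Gaussian variable `g k`. -/
noncomputable def partialDeriv (k : κ) : Derivation ℝ (TrigPoly κ) (TrigPoly κ) :=
  MvPolynomial.pderiv (Sum.inl k)

/-- The derivative in the angle, `cos θ ∂/∂(sin θ) - sin θ ∂/∂(cos θ)`. -/
noncomputable def angleDeriv : Derivation ℝ (TrigPoly κ) (TrigPoly κ) :=
  (MvPolynomial.X (Sum.inr false) : TrigPoly κ) • MvPolynomial.pderiv (Sum.inr true) -
    (MvPolynomial.X (Sum.inr true) : TrigPoly κ) • MvPolynomial.pderiv (Sum.inr false)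

variable [Fintype κ]

lemma evalAt_monomial (θ : ℝ) (g : κ → ℝ) (u : (κ ⊕ Bool) →₀ ℕ) (a : ℝ) :
    evalAt θ g (MvPolynomial.monomial u a) =
      a * (Real.sin θ ^ u (Sum.inr true) * Real.cos θ ^ u (Sum.inr false)) *
        ∏ k, g k ^ u (Sum.inl k) := by
  rw [evalAt, MvPolynomial.aeval_monomial, Finsupp.prod_fintype _ _ (by simp),
    Fintype.prod_sum_type, Fintype.prod_bool]
  simp only [Sum.elim_inl, Sum.elim_inr, cond_true, cond_false, Algebra.algebraMap_self,
    RingHom.id_apply]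
  ring

lemma integrable_evalAt (θ : ℝ) (p : TrigPoly κ) :
    Integrable (fun g => evalAt θ g p) (gaussianProduct κ) := by
  induction p using MvPolynomial.induction_on' with
  | monomial u a =>
    simp only [evalAt_monomial]
    exact (Integrable.fintype_prod fun k => integrable_pow_gaussianReal _).const_mul _
  | add p q hp hq =>
    simp only [map_add]
    exact hp.add hq

/-- The expectation of a `TrigPoly` over the Gaussian variables, at a fixed angle. -/
noncomputable def expectation (θ : ℝ) : TrigPoly κ →ₗ[ℝ] ℝ where
  toFun p := ∫ g, evalAt θ g p ∂(gaussianProduct κ)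
  map_add' p q := by
    simp only [map_add]
    exact integral_add (integrable_evalAt θ p) (integrable_evalAt θ q)
  map_smul' c p := by
    simp only [map_smul, RingHom.id_apply, smul_eq_mul]
    exact integral_const_mul _ _

lemma expectation_monomial (θ : ℝ) (u : (κ ⊕ Bool) →₀ ℕ) (a : ℝ) :
    expectation θ (MvPolynomial.monomial u a) =
      a * (Real.sin θ ^ u (Sum.inr true) * Real.cos θ ^ u (Sum.inr false)) *
        ∏ k, ∫ x, x ^ u (Sum.inl k) ∂(gaussianReal 0 1) := by
  change ∫ g, evalAt θ g _ ∂_ = _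
  simp only [evalAt_monomial]
  rw [integral_const_mul, integral_fintype_prod_eq_prod (f := fun k (x : ℝ) => x ^ u (Sum.inl k))]

lemma hasDerivAt_expectation (p : TrigPoly κ) (θ : ℝ) :
    HasDerivAt (fun t => expectation t p) (expectation θ (angleDeriv p)) θ := by
  induction p using MvPolynomial.induction_on' with
  | monomial u a =>
    simp only [expectation_monomial, angleDeriv, Derivation.sub_apply, Derivation.smul_apply,
      smul_eq_mul, MvPolynomial.pderiv_monomial, MvPolynomial.X,
      MvPolynomial.monomial_mul, map_sub]
    refine ((((Real.hasDerivAt_sin θ).fun_pow (u (Sum.inr true))).fun_mul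
      ((Real.hasDerivAt_cos θ).fun_pow (u (Sum.inr false)))).const_mul a).mul_const
        (∏ k, ∫ x, x ^ u (Sum.inl k) ∂(gaussianReal 0 1)) |>.congr_deriv ?_
    simp
    ring
  | add p q hp hq =>
    simp only [map_add]
    exact hp.add hq

lemma expectation_X_mul (θ : ℝ) (k : κ) (p : TrigPoly κ) :
    expectation θ (MvPolynomial.X (Sum.inl k) * p) = expectation θ (partialDeriv k p) := by
  classical
  induction p using MvPolynomial.induction_on' with
  | monomial u a =>
    rw [partialDeriv, MvPolynomial.pderiv_monomial, mul_comm, MvPolynomial.X,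
      MvPolynomial.monomial_mul, expectation_monomial, expectation_monomial,
      ← Finset.mul_prod_erase _ _ (Finset.mem_univ k),
      ← Finset.mul_prod_erase _ (fun j => ∫ _, _ ∂_) (Finset.mem_univ k)]
    have hothers : ∏ j ∈ Finset.univ.erase k,
          ∫ x, x ^ (u + fun₀ | Sum.inl k => 1) (Sum.inl j) ∂(gaussianReal 0 1) =
        ∏ j ∈ Finset.univ.erase k,
          ∫ x, x ^ (u - fun₀ | Sum.inl k => 1) (Sum.inl j) ∂(gaussianReal 0 1) :=
      Finset.prod_congr rfl fun j hj => by
        simp [(Finset.ne_of_mem_erase hj).symm]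
    rw [hothers]
    simp [integral_pow_succ_gaussianReal]
    ring
  | add p q hp hq => simp only [mul_add, map_add, hp, hq]

end TrigPoly

end TrigPoly

section Derivations

variable {n R S : Type*} [CommSemiring R] [CommSemiring S] [Algebra R S]

lemma map_derivation_smul (D : Derivation R S S) (p : S) (M : Matrix n n S) :
    (p • M).map D = p • M.map D + D p • M := by
  ext i j
  simp [mul_comm]

variable [Fintype n]

lemma map_derivation_mul (D : Derivation R S S) (A B : Matrix n n S) :
    (A * B).map D = A.map D * B + A * B.map D := by
  ext i j
  simp only [map_apply, mul_apply, Matrix.add_apply, map_sum, Derivation.leibniz, smul_eq_mul,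
    ← Finset.sum_add_distrib]
  exact Finset.sum_congr rfl fun _ _ => by ring

lemma map_derivation_pow [DecidableEq n] (D : Derivation R S S) (A : Matrix n n S) (k : ℕ) :
    (A ^ k).map D = ∑ i ∈ Finset.range k, A ^ i * A.map D * A ^ (k - 1 - i) := by
  induction k with
  | zero =>
    ext i j
    simp only [pow_zero, map_apply, one_apply, Finset.range_zero, Finset.sum_empty,
      Matrix.zero_apply]
    split_ifs <;> simp
  | succ k ih =>
    rw [pow_succ, map_derivation_mul, ih, Finset.sum_range_succ, Finset.sum_mul,
      add_tsub_cancel_right, Nat.sub_self, pow_zero, Matrix.mul_one]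
    congr 1
    refine Finset.sum_congr rfl fun i hi => ?_
    have hki : k - i = k - 1 - i + 1 := by have := Finset.mem_range.1 hi; omega
    rw [hki, pow_succ, Matrix.mul_assoc]

end Derivations

section GaussianMatrices

variable {ι κ n : Type*} [Fintype n] [DecidableEq n]

namespace TrigPoly

/-- Evaluation of a matrix of `TrigPoly`s at the Gaussian vector `g` and the angle `θ`. -/
noncomputable def evalMatrix (θ : ℝ) (g : κ → ℝ) : Matrix n n (TrigPoly κ) →ₐ[ℝ] Matrix n n ℝ :=
  (evalAt θ g).mapMatrix

/-- A real matrix, viewed as a matrix of constant `TrigPoly`s. -/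
noncomputable def constMatrix : Matrix n n ℝ →ₐ[ℝ] Matrix n n (TrigPoly κ) :=
  (Algebra.ofId ℝ (TrigPoly κ)).mapMatrix

@[simp]
lemma evalMatrix_constMatrix (θ : ℝ) (g : κ → ℝ) (A : Matrix n n ℝ) :
    evalMatrix θ g (constMatrix A) = A := by
  ext i j
  exact (evalAt θ g).commutes (A i j)

lemma evalMatrix_smul (θ : ℝ) (g : κ → ℝ) (p : TrigPoly κ) (M : Matrix n n (TrigPoly κ)) :
    evalMatrix θ g (p • M) = evalAt θ g p • evalMatrix θ g M := by
  ext i j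
  exact map_mul (evalAt θ g) p (M i j)

lemma evalMatrix_eq_sum (θ : ℝ) (g : κ → ℝ) (M : Matrix n n (TrigPoly κ)) :
    evalMatrix θ g M = ∑ i, ∑ j, evalAt θ g (M i j) • single i j (1 : ℝ) := by
  conv_lhs => rw [matrix_eq_sum_single (evalMatrix θ g M)]
  simp only [smul_single, smul_eq_mul, mul_one]
  rfl

lemma map_derivation_constMatrix (D : Derivation ℝ (TrigPoly κ) (TrigPoly κ))
    (A : Matrix n n ℝ) : (constMatrix A).map D = 0 := by
  refine Matrix.ext fun i j => ?_
  exact D.map_algebraMap (A i j)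

end TrigPoly

/-- The coefficients of the Gaussian series `cos θ ∑ a i • P i + sin θ ∑ b k • Q k`. -/
noncomputable def rotatedFamily {E : Type*} [SMul ℝ E] (θ : ℝ) (P : ι → E) (Q : κ → E) :
    ι ⊕ κ → E :=
  Sum.elim (fun i => Real.cos θ • P i) (fun k => Real.sin θ • Q k)

lemma rotatedFamily_zero {E : Type*} [AddCommMonoid E] [Module ℝ E] (P : ι → E) (Q : κ → E) :
    rotatedFamily 0 P Q = Sum.elim P 0 := by
  ext (i | k) <;> simp [rotatedFamily]

lemma rotatedFamily_pi_div_two {E : Type*} [AddCommMonoid E] [Module ℝ E] (P : ι → E)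
    (Q : κ → E) : rotatedFamily (Real.pi / 2) P Q = Sum.elim (0 : ι → E) Q := by
  ext (i | k) <;> simp [rotatedFamily]

variable [Fintype ι] [Fintype κ]

/-- The Gaussian series `∑ k, g k • F k`. -/
def gaussianSeries {E : Type*} [AddCommMonoid E] [Module ℝ E] (F : κ → E) (g : κ → ℝ) : E :=
  ∑ k, g k • F k

namespace TrigPoly

/-- The Gaussian series `∑ k, g k • F k` as a matrix of `TrigPoly`s. -/
noncomputable def seriesMatrix (F : κ → Matrix n n ℝ) : Matrix n n (TrigPoly κ) :=
  ∑ k, (MvPolynomial.X (Sum.inl k) : TrigPoly κ) • constMatrix (F k)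

/-- The Gaussian series with coefficients `rotatedFamily θ P Q` as a matrix of `TrigPoly`s. -/
noncomputable def rotatedMatrix (P : ι → Matrix n n ℝ) (Q : κ → Matrix n n ℝ) :
    Matrix n n (TrigPoly (ι ⊕ κ)) :=
  (MvPolynomial.X (Sum.inr false) : TrigPoly (ι ⊕ κ)) • seriesMatrix (Sum.elim P 0) +
    (MvPolynomial.X (Sum.inr true) : TrigPoly (ι ⊕ κ)) • seriesMatrix (Sum.elim 0 Q)

@[simp]
lemma evalMatrix_seriesMatrix (θ : ℝ) (g : κ → ℝ) (F : κ → Matrix n n ℝ) :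
    evalMatrix θ g (seriesMatrix F) = gaussianSeries F g := by
  simp [seriesMatrix, gaussianSeries, evalMatrix_smul, evalAt]

@[simp]
lemma evalMatrix_rotatedMatrix (θ : ℝ) (g : ι ⊕ κ → ℝ) (P : ι → Matrix n n ℝ)
    (Q : κ → Matrix n n ℝ) :
    evalMatrix θ g (rotatedMatrix P Q) = gaussianSeries (rotatedFamily θ P Q) g := by
  simp [rotatedMatrix, gaussianSeries, rotatedFamily, evalMatrix_smul, evalAt, Finset.smul_sum,
    smul_comm (g _)]

lemma map_derivation_seriesMatrix (D : Derivation ℝ (TrigPoly κ) (TrigPoly κ))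
    (F : κ → Matrix n n ℝ) :
    (seriesMatrix F).map D = ∑ k, D (MvPolynomial.X (Sum.inl k)) • constMatrix (F k) := by
  rw [seriesMatrix, ← D.coeFn_coe, ← LinearMap.mapMatrix_apply, map_sum]
  refine Finset.sum_congr rfl fun k _ => ?_
  rw [LinearMap.mapMatrix_apply, D.coeFn_coe, map_derivation_smul, map_derivation_constMatrix,
    smul_zero, zero_add]

lemma partialDeriv_seriesMatrix (k : κ) (F : κ → Matrix n n ℝ) :
    (seriesMatrix F).map (partialDeriv k) = constMatrix (F k) := by
  rw [map_derivation_seriesMatrix, Finset.sum_eq_single k]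
  · rw [partialDeriv, MvPolynomial.pderiv_X_self, one_smul]
  · intro j _ hj
    rw [partialDeriv, MvPolynomial.pderiv_X_of_ne (by simpa using hj), zero_smul]
  · simp

lemma angleDeriv_seriesMatrix (F : κ → Matrix n n ℝ) : (seriesMatrix F).map angleDeriv = 0 := by
  rw [map_derivation_seriesMatrix]
  exact Finset.sum_eq_zero fun k _ => by simp [angleDeriv]

lemma evalMatrix_partialDeriv_rotatedMatrix (θ : ℝ) (g : ι ⊕ κ → ℝ) (k : ι ⊕ κ)
    (P : ι → Matrix n n ℝ) (Q : κ → Matrix n n ℝ) :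
    evalMatrix θ g ((rotatedMatrix P Q).map (partialDeriv k)) = rotatedFamily θ P Q k := by
  rw [rotatedMatrix, Matrix.map_add _ (map_add _), map_derivation_smul, map_derivation_smul,
    partialDeriv_seriesMatrix, partialDeriv_seriesMatrix]
  rcases k with i | k <;> simp [partialDeriv, rotatedFamily, evalMatrix_smul, evalAt]

lemma evalMatrix_angleDeriv_rotatedMatrix (θ : ℝ) (g : ι ⊕ κ → ℝ) (P : ι → Matrix n n ℝ)
    (Q : κ → Matrix n n ℝ) :
    evalMatrix θ g ((rotatedMatrix P Q).map angleDeriv) =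
      gaussianSeries (rotatedFamily (θ + Real.pi / 2) P Q) g := by
  rw [rotatedMatrix, Matrix.map_add _ (map_add _), map_derivation_smul, map_derivation_smul,
    angleDeriv_seriesMatrix, angleDeriv_seriesMatrix]
  simp [angleDeriv, gaussianSeries, rotatedFamily, evalMatrix_smul, evalAt, Finset.smul_sum,
    smul_comm (g _), Real.cos_add_pi_div_two, Real.sin_add_pi_div_two]

lemma integrable_evalMatrix (θ : ℝ) (M : Matrix n n (TrigPoly κ)) :
    Integrable (fun g => evalMatrix θ g M) (gaussianProduct κ) := by
  simp only [evalMatrix_eq_sum]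
  exact integrable_finsetSum _ fun i _ => integrable_finsetSum _ fun j _ =>
    (integrable_evalAt θ (M i j)).smul_const _

lemma integral_evalMatrix (θ : ℝ) (M : Matrix n n (TrigPoly κ)) :
    ∫ g, evalMatrix θ g M ∂(gaussianProduct κ) =
      ∑ i, ∑ j, expectation θ (M i j) • single i j (1 : ℝ) := by
  have hint (i j : n) :
      Integrable (fun g => evalAt θ g (M i j) • single i j (1 : ℝ)) (gaussianProduct κ) :=
    (integrable_evalAt θ (M i j)).smul_const _
  simp only [evalMatrix_eq_sum]
  rw [integral_finsetSum _ fun i _ => integrable_finsetSum _ fun j _ => hint i j]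
  refine Finset.sum_congr rfl fun i _ => ?_
  rw [integral_finsetSum _ fun j _ => hint i j]
  exact Finset.sum_congr rfl fun j _ => integral_smul_const _ _

lemma hasDerivAt_integral_evalMatrix (θ : ℝ) (M : Matrix n n (TrigPoly κ)) :
    HasDerivAt (fun t => ∫ g, evalMatrix t g M ∂(gaussianProduct κ))
      (∫ g, evalMatrix θ g (M.map angleDeriv) ∂(gaussianProduct κ)) θ := by
  simp only [integral_evalMatrix]
  exact HasDerivAt.fun_sum fun i _ => HasDerivAt.fun_sum fun j _ =>
    (hasDerivAt_expectation (M i j) θ).smul_const _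

lemma integral_evalMatrix_X_smul (θ : ℝ) (k : κ) (M : Matrix n n (TrigPoly κ)) :
    ∫ g, evalMatrix θ g ((MvPolynomial.X (Sum.inl k) : TrigPoly κ) • M) ∂(gaussianProduct κ) =
      ∫ g, evalMatrix θ g (M.map (partialDeriv k)) ∂(gaussianProduct κ) := by
  simp only [integral_evalMatrix, Matrix.smul_apply, smul_eq_mul, expectation_X_mul, map_apply]

lemma integral_evalMatrix_mul_gaussianSeries_mul (θ : ℝ) (F : κ → Matrix n n ℝ)
    (L M : Matrix n n (TrigPoly κ)) :
    ∫ g, evalMatrix θ g L * gaussianSeries F g * evalMatrix θ g M ∂(gaussianProduct κ) =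
      ∫ g, ∑ k, (evalMatrix θ g (L.map (partialDeriv k)) * F k * evalMatrix θ g M +
        evalMatrix θ g L * F k * evalMatrix θ g (M.map (partialDeriv k))) ∂(gaussianProduct κ) := by
  have hparts (k : κ) (g : κ → ℝ) :
      evalMatrix θ g (L.map (partialDeriv k)) * F k * evalMatrix θ g M +
          evalMatrix θ g L * F k * evalMatrix θ g (M.map (partialDeriv k)) =
        evalMatrix θ g ((L * constMatrix (F k) * M).map (partialDeriv k)) := by
    simp [map_derivation_mul, map_derivation_constMatrix]
  have hseries (g : κ → ℝ) : evalMatrix θ g L * gaussianSeries F g * evalMatrix θ g M =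
      ∑ k, evalMatrix θ g
        ((MvPolynomial.X (Sum.inl k) : TrigPoly κ) • (L * constMatrix (F k) * M)) := by
    rw [← evalMatrix_seriesMatrix θ, ← map_mul, ← map_mul, seriesMatrix, Finset.mul_sum,
      Finset.sum_mul, map_sum]
    simp only [Matrix.mul_smul, Matrix.smul_mul]
  simp only [hparts, hseries]
  rw [integral_finsetSum _ fun k _ => integrable_evalMatrix θ _,
    integral_finsetSum _ fun k _ => integrable_evalMatrix θ _]
  exact Finset.sum_congr rfl fun k _ => integral_evalMatrix_X_smul θ k _

end TrigPoly

end GaussianMatrices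

section Crossings

variable {ι κ l m n p : Type*} [Fintype ι] [Fintype κ] [Fintype l] [Fintype m] [Fintype n]
  [Fintype p]

/-- The completely positive map `a ↦ ∑ j, R j * a * R j` of the family `R`. -/
def covMap {E : Type*} [NonUnitalNonAssocSemiring E] (R : κ → E) (a : E) : E :=
  ∑ j, R j * a * R j

/-- The crossing pairing of two families: the positions of the `R j` and those of the `F k`
interlace. -/
def crossing {E : Type*} [NonUnitalNonAssocSemiring E] (R : ι → E) (F : κ → E) (a b c d : E) : E :=
  ∑ j, ∑ k, R j * a * F k * b * R j * c * F k * d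

/-- The coefficients `R` of a Gaussian series `X` of symmetric matrices satisfy `v(X) ≤ v` and
`σ(X) ≤ s`, the two parameters being expressed through quadratic forms. -/
structure CovarianceBound (R : κ → Matrix m m ℝ) (v s : ℝ) : Prop where
  isSymm : ∀ j, (R j).IsSymm
  v_nonneg : 0 ≤ v
  s_nonneg : 0 ≤ s
  sum_trace_mul_sq_le : ∀ B, ∑ j, trace (R j * B) ^ 2 ≤ v ^ 2 * frobNormSq B
  sum_mulVec_dotProduct_self_le :
    ∀ x, ∑ j, (R j *ᵥ x) ⬝ᵥ (R j *ᵥ x) ≤ s ^ 2 * (x ⬝ᵥ x)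

lemma trace_transpose_mul_self (M : Matrix m n ℝ) : trace (Mᵀ * M) = frobNormSq M := by
  simp only [trace, diag_apply, mul_apply, transpose_apply, ← sq, frobNormSq]
  exact Finset.sum_comm

lemma sum_abs_mul_abs_le {f g : n → ℝ} {P Q : ℝ} (hP : 0 ≤ P) (hQ : 0 ≤ Q)
    (hf : ∑ t, f t ^ 2 ≤ P ^ 2) (hg : ∑ t, g t ^ 2 ≤ Q ^ 2) : ∑ t, |f t| * |g t| ≤ P * Q := by
  refine (Real.sum_mul_le_sqrt_mul_sqrt _ _ _).trans ?_
  simp only [sq_abs]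
  exact mul_le_mul (Real.sqrt_le_iff.2 ⟨hP, hf⟩) (Real.sqrt_le_iff.2 ⟨hQ, hg⟩)
    (Real.sqrt_nonneg _) hP

namespace CovarianceBound

variable {R : κ → Matrix m m ℝ} {v s v' s' : ℝ}

lemma mono (hR : CovarianceBound R v s) (hv : v ≤ v') (hs : s ≤ s') : CovarianceBound R v' s' where
  isSymm := hR.isSymm
  v_nonneg := hR.v_nonneg.trans hv
  s_nonneg := hR.s_nonneg.trans hs
  sum_trace_mul_sq_le B := (hR.sum_trace_mul_sq_le B).trans <|
    mul_le_mul_of_nonneg_right (pow_le_pow_left₀ hR.v_nonneg hv 2) (frobNormSq_nonneg B)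
  sum_mulVec_dotProduct_self_le x := (hR.sum_mulVec_dotProduct_self_le x).trans <|
    mul_le_mul_of_nonneg_right (pow_le_pow_left₀ hR.s_nonneg hs 2) (dotProduct_self_nonneg x)

lemma frobNormSq_sum_smul_le (hR : CovarianceBound R v s) (c : κ → ℝ) :
    frobNormSq (∑ j, c j • R j) ≤ v ^ 2 * ∑ j, c j ^ 2 := by
  set M := ∑ j, c j • R j with hM
  have hdual : frobNormSq M = ∑ j, c j * trace (R j * M) := by
    rw [← trace_transpose_mul_self]
    nth_rewrite 1 [hM]
    rw [transpose_sum, Finset.sum_mul, trace_sum]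
    refine Finset.sum_congr rfl fun j _ => ?_
    rw [transpose_smul, (hR.isSymm j).eq, Matrix.smul_mul, trace_smul, smul_eq_mul]
  have hsq : frobNormSq M * frobNormSq M ≤ (v ^ 2 * ∑ j, c j ^ 2) * frobNormSq M := by
    calc frobNormSq M * frobNormSq M = (∑ j, c j * trace (R j * M)) ^ 2 := by rw [← hdual, sq]
      _ ≤ (∑ j, c j ^ 2) * ∑ j, trace (R j * M) ^ 2 := Finset.sum_mul_sq_le_sq_mul_sq _ _ _
      _ ≤ (∑ j, c j ^ 2) * (v ^ 2 * frobNormSq M) :=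
        mul_le_mul_of_nonneg_left (hR.sum_trace_mul_sq_le M)
          (Finset.sum_nonneg fun j _ => sq_nonneg _)
      _ = (v ^ 2 * ∑ j, c j ^ 2) * frobNormSq M := by ring
  rcases (frobNormSq_nonneg M).eq_or_lt with h0 | h0
  · rw [← h0]
    exact mul_nonneg (sq_nonneg v) (Finset.sum_nonneg fun j _ => sq_nonneg _)
  · exact le_of_mul_le_mul_right hsq h0

variable [DecidableEq m] [DecidableEq p]

lemma sum_slice_sq_le (hR : CovarianceBound R v s) (x : m → ℝ) (B : Matrix l m ℝ)
    (C : Matrix n m ℝ) (D : Matrix m p ℝ) :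
    ∑ t : l × n × p, (∑ j, (B *ᵥ (R j *ᵥ x)) t.1 * (C * R j * D) t.2.1 t.2.2) ^ 2 ≤
      (v * s * ‖B‖ * ‖C‖ * ‖D‖ * √(x ⬝ᵥ x)) ^ 2 := by
  have hrow (b : l) :
      ∑ t : n × p, (∑ j, (B *ᵥ (R j *ᵥ x)) b * (C * R j * D) t.1 t.2) ^ 2 ≤
        ‖C‖ ^ 2 * (v ^ 2 * ∑ j, (B *ᵥ (R j *ᵥ x)) b ^ 2) * ‖D‖ ^ 2 := by
    have hsum : ∑ t : n × p, (∑ j, (B *ᵥ (R j *ᵥ x)) b * (C * R j * D) t.1 t.2) ^ 2 =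
        frobNormSq (C * (∑ j, (B *ᵥ (R j *ᵥ x)) b • R j) * D) := by
      rw [Fintype.sum_prod_type, frobNormSq]
      simp only [Matrix.mul_sum, Matrix.sum_mul, Matrix.sum_apply, Matrix.mul_smul,
        Matrix.smul_mul, Matrix.smul_apply, smul_eq_mul]
    rw [hsum]
    refine (frobNormSq_mul_le_right _ _).trans (mul_le_mul_of_nonneg_right ?_ (sq_nonneg _))
    exact (frobNormSq_mul_le_left _ _).trans
      (mul_le_mul_of_nonneg_left (hR.frobNormSq_sum_smul_le _) (sq_nonneg _))
  have hcol : ∑ b, ∑ j, (B *ᵥ (R j *ᵥ x)) b ^ 2 ≤ ‖B‖ ^ 2 * (s ^ 2 * (x ⬝ᵥ x)) := by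
    rw [Finset.sum_comm]
    refine le_trans (Finset.sum_le_sum fun j _ => ?_) ((Finset.mul_sum _ _ _).symm.trans_le
      (mul_le_mul_of_nonneg_left (hR.sum_mulVec_dotProduct_self_le x) (sq_nonneg ‖B‖)))
    simpa only [dotProduct, ← sq] using mulVec_dotProduct_self_le B (R j *ᵥ x)
  calc _ ≤ ∑ b, ‖C‖ ^ 2 * (v ^ 2 * ∑ j, (B *ᵥ (R j *ᵥ x)) b ^ 2) * ‖D‖ ^ 2 := by
        rw [Fintype.sum_prod_type]
        exact Finset.sum_le_sum fun b _ => hrow b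
    _ = ‖C‖ ^ 2 * v ^ 2 * ‖D‖ ^ 2 * ∑ b, ∑ j, (B *ᵥ (R j *ᵥ x)) b ^ 2 := by
        rw [Finset.mul_sum]
        exact Finset.sum_congr rfl fun b _ => by ring
    _ ≤ ‖C‖ ^ 2 * v ^ 2 * ‖D‖ ^ 2 * (‖B‖ ^ 2 * (s ^ 2 * (x ⬝ᵥ x))) :=
        mul_le_mul_of_nonneg_left hcol (by positivity)
    _ = (v * s * ‖B‖ * ‖C‖ * ‖D‖ * √(x ⬝ᵥ x)) ^ 2 := by
        rw [mul_pow _ (√_), Real.sq_sqrt (dotProduct_self_nonneg x)]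
        ring

end CovarianceBound

lemma dotProduct_mul_mulVec_eq_sum (w : l → ℝ) (P : Matrix l m ℝ) (Q : Matrix m n ℝ) (z : n → ℝ) :
    w ⬝ᵥ ((P * Q) *ᵥ z) = ∑ t : l × m × n, w t.1 * Q t.2.1 t.2.2 * (P t.1 t.2.1 * z t.2.2) := by
  rw [← mulVec_mulVec]
  simp only [Fintype.sum_prod_type, dotProduct, mulVec, Finset.mul_sum]
  exact Finset.sum_congr rfl fun _ _ => Finset.sum_congr rfl fun _ _ =>
    Finset.sum_congr rfl fun _ _ => by ring

variable {R : ι → Matrix m m ℝ} {F : κ → Matrix m m ℝ} {v s v' s' : ℝ}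

lemma dotProduct_crossing_mulVec (hR : ∀ j, (R j).IsSymm) (A B C D : Matrix m m ℝ) (y x : m → ℝ) :
    y ⬝ᵥ (crossing R F A B C D *ᵥ x) =
      ∑ t : m × m × m, (∑ j, (R j *ᵥ y) t.1 * (B * R j) t.2.1 t.2.2) *
        ∑ k, (C *ᵥ (F k *ᵥ (D *ᵥ x))) t.2.2 * (A * F k) t.1 t.2.1 := by
  have hterm (j : ι) (k : κ) : y ⬝ᵥ ((R j * A * F k * B * R j * C * F k * D) *ᵥ x) =
      (R j *ᵥ y) ⬝ᵥ ((A * F k * (B * R j)) *ᵥ (C *ᵥ (F k *ᵥ (D *ᵥ x)))) := by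
    rw [← (hR j).eq, mulVec_transpose, ← dotProduct_mulVec, (hR j).eq]
    simp only [mulVec_mulVec, Matrix.mul_assoc]
  simp only [crossing, sum_mulVec, dotProduct_sum, hterm, dotProduct_mul_mulVec_eq_sum,
    Finset.sum_mul_sum]
  rw [Finset.sum_congr rfl fun j _ => Finset.sum_comm, Finset.sum_comm]
  exact Finset.sum_congr rfl fun t _ => Finset.sum_congr rfl fun j _ =>
    Finset.sum_congr rfl fun k _ => by ring

variable [DecidableEq m]

lemma norm_crossing_le (hR : CovarianceBound R v s) (hF : CovarianceBound F v' s')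
    (A B C D : Matrix m m ℝ) :
    ‖crossing R F A B C D‖ ≤ v * s * (v' * s') * (‖A‖ * ‖B‖ * ‖C‖ * ‖D‖) := by
  have := hR.v_nonneg
  have := hR.s_nonneg
  have := hF.v_nonneg
  have := hF.s_nonneg
  refine norm_le_of_abs_dotProduct_mulVec_le (by positivity) fun y x => ?_
  rw [dotProduct_crossing_mulVec hR.isSymm]
  have h1 := hR.sum_slice_sq_le y (1 : Matrix m m ℝ) B (1 : Matrix m m ℝ)
  have h2 := hF.sum_slice_sq_le (D *ᵥ x) C A (1 : Matrix m m ℝ)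
  simp only [one_mulVec, Matrix.mul_one] at h1 h2
  rw [← ((Equiv.prodAssoc m m m).symm.trans (Equiv.prodComm (m × m) m)).sum_comp] at h2
  have hDx : √((D *ᵥ x) ⬝ᵥ (D *ᵥ x)) ≤ ‖D‖ * √(x ⬝ᵥ x) := by
    refine Real.sqrt_le_iff.2 ⟨by positivity, (mulVec_dotProduct_self_le D x).trans_eq ?_⟩
    rw [mul_pow, Real.sq_sqrt (dotProduct_self_nonneg x)]
  calc _ ≤ ∑ t : m × m × m, |∑ j, (R j *ᵥ y) t.1 * (B * R j) t.2.1 t.2.2| *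
          |∑ k, (C *ᵥ (F k *ᵥ (D *ᵥ x))) t.2.2 * (A * F k) t.1 t.2.1| := by
        simp only [← abs_mul]
        exact Finset.abs_sum_le_sum_abs _ _
    _ ≤ (v * s * ‖(1 : Matrix m m ℝ)‖ * ‖B‖ * ‖(1 : Matrix m m ℝ)‖ * √(y ⬝ᵥ y)) *
          (v' * s' * ‖C‖ * ‖A‖ * ‖(1 : Matrix m m ℝ)‖ * √((D *ᵥ x) ⬝ᵥ (D *ᵥ x))) :=
        sum_abs_mul_abs_le (by positivity) (by positivity) h1 h2
    _ ≤ (v * s * 1 * ‖B‖ * 1 * √(y ⬝ᵥ y)) * (v' * s' * ‖C‖ * ‖A‖ * 1 * (‖D‖ * √(x ⬝ᵥ x))) := by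
        gcongr <;> exact norm_one_le
    _ = v * s * (v' * s') * (‖A‖ * ‖B‖ * ‖C‖ * ‖D‖) * √(y ⬝ᵥ y) * √(x ⬝ᵥ x) := by ring

lemma norm_covMap_le (hR : CovarianceBound R v s) (A : Matrix m m ℝ) :
    ‖covMap R A‖ ≤ s ^ 2 * ‖A‖ := by
  have := hR.s_nonneg
  refine norm_le_of_abs_dotProduct_mulVec_le (by positivity) fun y x => ?_
  have hsum : y ⬝ᵥ (covMap R A *ᵥ x) =
      ∑ t : ι × m, (R t.1 *ᵥ y) t.2 * (A *ᵥ (R t.1 *ᵥ x)) t.2 := by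
    rw [Fintype.sum_prod_type, covMap, sum_mulVec, dotProduct_sum]
    refine Finset.sum_congr rfl fun j _ => ?_
    rw [← mulVec_mulVec, ← mulVec_mulVec, dotProduct_mulVec, ← mulVec_transpose,
      (hR.isSymm j).eq, mulVec_mulVec]
    simp only [dotProduct, mulVec_mulVec]
  have hleft : ∑ t : ι × m, (R t.1 *ᵥ y) t.2 ^ 2 ≤ (s * √(y ⬝ᵥ y)) ^ 2 := by
    rw [mul_pow, Real.sq_sqrt (dotProduct_self_nonneg y), Fintype.sum_prod_type]
    simpa only [dotProduct, ← sq] using hR.sum_mulVec_dotProduct_self_le y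
  have hright : ∑ t : ι × m, (A *ᵥ (R t.1 *ᵥ x)) t.2 ^ 2 ≤ (‖A‖ * (s * √(x ⬝ᵥ x))) ^ 2 := by
    rw [mul_pow, mul_pow, Real.sq_sqrt (dotProduct_self_nonneg x), Fintype.sum_prod_type]
    refine le_trans (Finset.sum_le_sum fun j _ => ?_) ((Finset.mul_sum _ _ _).symm.trans_le
      (mul_le_mul_of_nonneg_left (hR.sum_mulVec_dotProduct_self_le x) (sq_nonneg ‖A‖)))
    simpa only [dotProduct, ← sq] using mulVec_dotProduct_self_le A (R j *ᵥ x)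
  rw [hsum]
  calc _ ≤ ∑ t : ι × m, |(R t.1 *ᵥ y) t.2| * |(A *ᵥ (R t.1 *ᵥ x)) t.2| := by
        simp only [← abs_mul]
        exact Finset.abs_sum_le_sum_abs _ _
    _ ≤ s * √(y ⬝ᵥ y) * (‖A‖ * (s * √(x ⬝ᵥ x))) :=
        sum_abs_mul_abs_le (by positivity) (by positivity) hleft hright
    _ = s ^ 2 * ‖A‖ * √(y ⬝ᵥ y) * √(x ⬝ᵥ x) := by ring

end Crossings

section TraceBounds

variable {ι κ m : Type*} [Fintype ι] [Fintype κ] [Fintype m]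

/-- Quadruples as functions on `Fin 4`. -/
def quadEquiv (α : Type*) : α × α × α × α ≃ (Fin 4 → α) where
  toFun t := ![t.1, t.2.1, t.2.2.1, t.2.2.2]
  invFun p := (p 0, p 1, p 2, p 3)
  left_inv _ := rfl
  right_inv p := by ext i; fin_cases i <;> rfl

/-- The entries of `∑ j, R j ⊗ R j` in the four bases formed by the columns of `U i`. -/
def pairingKernel (R : κ → Matrix m m ℝ) (U : Fin 4 → Matrix m m ℝ) (p : Fin 4 → m) : ℝ :=
  ∑ j, ((U 0)ᵀ * R j * U 1) (p 0) (p 1) * ((U 2)ᵀ * R j * U 3) (p 2) (p 3)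

/-- The absolute value of the contribution of the index quadruple `p` to the trace of a crossing
pairing, see `trace_crossing_eq_sum`. -/
def crossingWeight (F : κ → Matrix m m ℝ) (R : ι → Matrix m m ℝ) (U : Fin 4 → Matrix m m ℝ)
    (p : Fin 4 → m) : ℝ :=
  |pairingKernel F U p| * |pairingKernel R (fun i => U (i + 1)) (fun i => p (i + 1))|

variable {R : ι → Matrix m m ℝ} {F : κ → Matrix m m ℝ} {v s v' s' : ℝ}

lemma pairingKernel_add_two (U : Fin 4 → Matrix m m ℝ) (p : Fin 4 → m) :
    pairingKernel R (fun i => U (i + 2)) (fun i => p (i + 2)) = pairingKernel R U p :=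
  Finset.sum_congr rfl fun _ _ => mul_comm _ _

lemma transpose_mul_mul_apply_comm {M : Matrix m m ℝ} (hM : M.IsSymm) (U V : Matrix m m ℝ)
    (a b : m) : (Uᵀ * M * V) a b = (Vᵀ * M * U) b a := by
  have h : (Vᵀ * M * U)ᵀ = Uᵀ * M * V := by
    rw [transpose_mul, transpose_mul, transpose_transpose, hM.eq, Matrix.mul_assoc]
  rw [← h, transpose_apply]

lemma pairingKernel_rev (hR : ∀ j, (R j).IsSymm) (U : Fin 4 → Matrix m m ℝ) (p : Fin 4 → m) :
    pairingKernel R (fun i => U i.rev) (fun i => p i.rev) = pairingKernel R U p := by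
  refine Finset.sum_congr rfl fun j _ => (mul_comm _ _).trans ?_
  exact congrArg₂ (· * ·) (transpose_mul_mul_apply_comm (hR j) _ _ _ _)
    (transpose_mul_mul_apply_comm (hR j) _ _ _ _)

lemma trace_mul_mul_mul_eq_sum (A B C D : Matrix m m ℝ) :
    trace (A * B * C * D) =
      ∑ p : Fin 4 → m, A (p 0) (p 1) * B (p 1) (p 2) * C (p 2) (p 3) * D (p 3) (p 0) := by
  rw [← (quadEquiv m).sum_comp]
  simp only [Fintype.sum_prod_type, trace, diag_apply, Matrix.mul_assoc A, Matrix.mul_assoc B,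
    mul_apply, Finset.mul_sum, mul_assoc]
  rfl

/-- A crossing diagram may be read off starting from any of its four arcs, at the price of
exchanging the two families. -/
lemma sum_mul_crossingWeight_add_one (U : Fin 4 → Matrix m m ℝ) (f : m → ℝ) (i : Fin 4) :
    ∑ p, f (p (i + 1)) * crossingWeight F R U p =
      ∑ p, f (p i) * crossingWeight R F (fun i => U (i + 1)) p := by
  rw [← ((Equiv.addRight (1 : Fin 4)).symm.arrowCongr (Equiv.refl m)).sum_comp
    fun p => f (p i) * _]
  refine Finset.sum_congr rfl fun p _ => ?_
  rw [crossingWeight, mul_comm |_|, ← pairingKernel_add_two U p]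
  rfl

variable [DecidableEq m]

lemma trace_crossing_eq_sum (U : Fin 4 → Matrix m m ℝ) (x : Fin 4 → m → ℝ)
    (M : Fin 4 → Matrix m m ℝ) (hM : ∀ i, M i = U i * diagonal (x i) * (U i)ᵀ) :
    trace (crossing R F (M 0) (M 1) (M 2) (M 3)) = ∑ p : Fin 4 → m, (∏ i, x i (p i)) *
      (pairingKernel F U p * pairingKernel R (fun i => U (i + 1)) (fun i => p (i + 1))) := by
  have hterm (j : ι) (k : κ) : trace (R j * M 0 * F k * M 1 * R j * M 2 * F k * M 3) =
      ∑ p : Fin 4 → m, (∏ i, x i (p i)) * ((((U 0)ᵀ * F k * U 1) (p 0) (p 1) *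
        ((U 2)ᵀ * F k * U 3) (p 2) (p 3)) * (((U 1)ᵀ * R j * U 2) (p 1) (p 2) *
          ((U 3)ᵀ * R j * U 0) (p 3) (p 0))) := by
    calc trace (R j * M 0 * F k * M 1 * R j * M 2 * F k * M 3)
        = trace (R j * U 0 * (diagonal (x 0) * ((U 0)ᵀ * F k * U 1) *
            (diagonal (x 1) * ((U 1)ᵀ * R j * U 2)) * (diagonal (x 2) * ((U 2)ᵀ * F k * U 3)) *
            (diagonal (x 3) * (U 3)ᵀ))) := by simp only [hM, Matrix.mul_assoc]
      _ = trace (diagonal (x 0) * ((U 0)ᵀ * F k * U 1) *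
            (diagonal (x 1) * ((U 1)ᵀ * R j * U 2)) * (diagonal (x 2) * ((U 2)ᵀ * F k * U 3)) *
            (diagonal (x 3) * ((U 3)ᵀ * R j * U 0))) := by
          rw [trace_mul_comm]
          simp only [Matrix.mul_assoc]
      _ = _ := by
          rw [trace_mul_mul_mul_eq_sum]
          refine Finset.sum_congr rfl fun p _ => ?_
          simp only [diagonal_mul, Fin.prod_univ_four]
          ring
  simp only [crossing, trace_sum, hterm, pairingKernel, Finset.sum_mul_sum]
  simp only [Finset.mul_sum]
  rw [Finset.sum_comm, Finset.sum_congr rfl fun k _ => Finset.sum_comm, Finset.sum_comm]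
  rfl

lemma sum_pairingKernel_sq_le (hR : CovarianceBound R v s) {U : Fin 4 → Matrix m m ℝ}
    (hU : ∀ i, (U i)ᵀ * U i = 1) (e : m) :
    ∑ t : m × m × m, pairingKernel R U (quadEquiv m (e, t)) ^ 2 ≤ (v * s) ^ 2 := by
  have hentry (j : ι) (b : m) :
      ((U 0)ᵀ * R j * U 1) e b = ((U 1)ᵀ *ᵥ (R j *ᵥ (U 0).col e)) b := by
    rw [transpose_mul_mul_apply_comm (hR.isSymm j), mulVec_mulVec]
    rfl
  have hcol : (U 0).col e ⬝ᵥ (U 0).col e = 1 := by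
    have h := congrFun (congrFun (hU 0) e) e
    rwa [one_apply_eq] at h
  have hnorm (i : Fin 4) : ‖U i‖ ≤ 1 := norm_le_one_of_transpose_mul_self (hU i)
  have := hR.v_nonneg
  have := hR.s_nonneg
  calc _ = ∑ t : m × m × m, (∑ j, ((U 1)ᵀ *ᵥ (R j *ᵥ (U 0).col e)) t.1 *
          ((U 2)ᵀ * R j * U 3) t.2.1 t.2.2) ^ 2 := by
        simp only [← hentry]
        rfl
    _ ≤ (v * s * ‖(U 1)ᵀ‖ * ‖(U 2)ᵀ‖ * ‖U 3‖ * √((U 0).col e ⬝ᵥ (U 0).col e)) ^ 2 :=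
        hR.sum_slice_sq_le _ _ _ _
    _ ≤ (v * s * 1 * 1 * 1 * √1) ^ 2 := by
        rw [hcol, norm_transpose, norm_transpose]
        gcongr <;> exact hnorm _
    _ = (v * s) ^ 2 := by rw [Real.sqrt_one]; ring

lemma sum_crossingWeight_le (hF : CovarianceBound F v' s') (hR : CovarianceBound R v s)
    {U : Fin 4 → Matrix m m ℝ} (hU : ∀ i, (U i)ᵀ * U i = 1) (e : m) :
    ∑ t : m × m × m, crossingWeight F R U (quadEquiv m (e, t)) ≤ v' * s' * (v * s) := by
  refine sum_abs_mul_abs_le (mul_nonneg hF.v_nonneg hF.s_nonneg)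
    (mul_nonneg hR.v_nonneg hR.s_nonneg) (sum_pairingKernel_sq_le hF hU e) ?_
  have h := sum_pairingKernel_sq_le hR (U := fun i => U (i.rev + 1)) (fun i => hU _) e
  let σ : m × m × m ≃ m × m × m :=
    ⟨fun t => (t.2.2, t.2.1, t.1), fun t => (t.2.2, t.2.1, t.1), fun _ => rfl, fun _ => rfl⟩
  rw [← σ.sum_comp] at h
  refine le_trans (Finset.sum_congr rfl fun t _ => ?_).le h
  rw [← pairingKernel_rev hR.isSymm]
  congr 2
  ext i
  fin_cases i <;> rfl

lemma sum_mul_crossingWeight_zero_le (hF : CovarianceBound F v' s') (hR : CovarianceBound R v s)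
    {U : Fin 4 → Matrix m m ℝ} (hU : ∀ i, (U i)ᵀ * U i = 1) {f : m → ℝ} (hf : ∀ e, 0 ≤ f e) :
    ∑ p, f (p 0) * crossingWeight F R U p ≤ v' * s' * (v * s) * ∑ e, f e := by
  rw [← (quadEquiv m).sum_comp, Fintype.sum_prod_type, Finset.mul_sum]
  refine Finset.sum_le_sum fun e _ => ?_
  calc ∑ t, f e * crossingWeight F R U (quadEquiv m (e, t))
      = f e * ∑ t, crossingWeight F R U (quadEquiv m (e, t)) := Finset.mul_sum _ _ _ |>.symm
    _ ≤ f e * (v' * s' * (v * s)) :=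
        mul_le_mul_of_nonneg_left (sum_crossingWeight_le hF hR hU e) (hf e)
    _ = _ := mul_comm _ _

lemma sum_mul_crossingWeight_le (hF : CovarianceBound F v' s') (hR : CovarianceBound R v s)
    {U : Fin 4 → Matrix m m ℝ} (hU : ∀ i, (U i)ᵀ * U i = 1) {f : m → ℝ} (hf : ∀ e, 0 ≤ f e)
    (i : Fin 4) :
    ∑ p, f (p i) * crossingWeight F R U p ≤ v' * s' * (v * s) * ∑ e, f e := by
  have h₁ := sum_mul_crossingWeight_add_one (F := F) (R := R) U f
  have h₂ := sum_mul_crossingWeight_add_one (F := R) (R := F) (fun i => U (i + 1)) f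
  have h₃ := sum_mul_crossingWeight_add_one (F := F) (R := R) (fun i => U (i + 1 + 1)) f
  have hFR := sum_mul_crossingWeight_zero_le hF hR (fun i => hU (i + 1 + 1)) hf
  have hRF₁ := sum_mul_crossingWeight_zero_le hR hF (fun i => hU (i + 1)) hf
  have hRF₃ := sum_mul_crossingWeight_zero_le hR hF (fun i => hU (i + 1 + 1 + 1)) hf
  rw [mul_comm (v * s)] at hRF₁ hRF₃
  fin_cases i
  · exact sum_mul_crossingWeight_zero_le hF hR hU hf
  · exact (h₁ 0).trans_le hRF₁
  · exact (h₁ 1).trans_le ((h₂ 0).trans_le hFR)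
  · exact (h₁ 2).trans_le ((h₂ 1).trans_le ((h₃ 0).trans_le hRF₃))

/-- A crossing of powers is written in eigenbases of the four matrices, and the product of their
eigenvalues is split by Young's inequality. -/
lemma abs_trace_crossing_pow_le (hR : CovarianceBound R v s) (hF : CovarianceBound F v' s')
    {X : Fin 4 → Matrix m m ℝ} (hX : ∀ i, (X i).IsSymm) (k : Fin 4 → ℕ) (hk : Even (∑ i, k i)) :
    |trace (crossing R F (X 0 ^ k 0) (X 1 ^ k 1) (X 2 ^ k 2) (X 3 ^ k 3))| ≤
      v * s * (v' * s') * ∑ i, trace (X i ^ ∑ j, k j) := by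
  choose U w hU hpow using fun i => exists_orthogonal_diagonalization (hX i)
  have htrace (i : Fin 4) : trace (X i ^ ∑ j, k j) = ∑ a, |w i a| ^ ∑ j, k j := by
    rw [hpow, trace_mul_comm, ← Matrix.mul_assoc, hU, Matrix.one_mul, trace_diagonal]
    exact Finset.sum_congr rfl fun a _ => (hk.pow_abs _).symm
  calc _ = |∑ p : Fin 4 → m, (∏ i, w i (p i) ^ k i) *
          (pairingKernel F U p * pairingKernel R (fun i => U (i + 1)) (fun i => p (i + 1)))| :=
        congrArg abs (trace_crossing_eq_sum U (fun i a => w i a ^ k i) (fun i => X i ^ k i)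
          fun i => hpow i (k i))
    _ ≤ ∑ p : Fin 4 → m, |∏ i, w i (p i) ^ k i| * crossingWeight F R U p := by
        refine (Finset.abs_sum_le_sum_abs _ _).trans_eq (Finset.sum_congr rfl fun p _ => ?_)
        rw [abs_mul, abs_mul, crossingWeight]
    _ ≤ ∑ p : Fin 4 → m, (∑ i, |w i (p i)| ^ ∑ j, k j) * crossingWeight F R U p :=
        Finset.sum_le_sum fun p _ => mul_le_mul_of_nonneg_right
          (abs_prod_pow_le_sum_abs_pow _ _) (mul_nonneg (abs_nonneg _) (abs_nonneg _))
    _ = ∑ i, ∑ p : Fin 4 → m, |w i (p i)| ^ (∑ j, k j) * crossingWeight F R U p := by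
        simp only [Finset.sum_mul]
        exact Finset.sum_comm
    _ ≤ ∑ i, v' * s' * (v * s) * ∑ a, |w i a| ^ ∑ j, k j :=
        Finset.sum_le_sum fun i _ => sum_mul_crossingWeight_le hF hR hU
          (fun a => pow_nonneg (abs_nonneg _) _) i
    _ = _ := by
        rw [← Finset.mul_sum, mul_comm (v' * s')]
        simp only [htrace]

lemma sum_sq_transpose_mul_mul_apply_le (hR : CovarianceBound R v s) {U : Matrix m m ℝ}
    (hU : Uᵀ * U = 1) (a : m) : ∑ b, ∑ j, (Uᵀ * R j * U) a b ^ 2 ≤ s ^ 2 := by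
  have hrow (j : ι) : ∑ b, (Uᵀ * R j * U) a b ^ 2 = (R j *ᵥ U.col a) ⬝ᵥ (R j *ᵥ U.col a) := by
    calc ∑ b, (Uᵀ * R j * U) a b ^ 2 = (Uᵀ *ᵥ (R j *ᵥ U.col a)) ⬝ᵥ (Uᵀ *ᵥ (R j *ᵥ U.col a)) := by
          refine Finset.sum_congr rfl fun b _ => ?_
          rw [transpose_mul_mul_apply_comm (hR.isSymm j), mulVec_mulVec, sq]
          rfl
      _ = _ := by
          rw [mulVec_transpose, ← dotProduct_mulVec, mulVec_vecMul, mul_eq_one_comm.1 hU,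
            one_mulVec]
  have hcol : U.col a ⬝ᵥ U.col a = 1 := by
    have h := congrFun (congrFun hU a) a
    rwa [one_apply_eq] at h
  rw [Finset.sum_comm]
  simpa only [hrow, hcol, mul_one] using hR.sum_mulVec_dotProduct_self_le (U.col a)

lemma trace_covMap_mul_eq_sum (hR : ∀ j, (R j).IsSymm) (U : Matrix m m ℝ) (x y : m → ℝ) :
    trace (covMap R (U * diagonal x * Uᵀ) * (U * diagonal y * Uᵀ)) =
      ∑ a, ∑ b, x a * y b * ∑ j, (Uᵀ * R j * U) a b ^ 2 := by
  have hterm (j : ι) : trace (R j * (U * diagonal x * Uᵀ) * R j * (U * diagonal y * Uᵀ)) =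
      ∑ a, ∑ b, x a * y b * (Uᵀ * R j * U) a b ^ 2 := by
    set K := Uᵀ * R j * U with hK
    have hsymm (a b : m) : K a b = K b a := transpose_mul_mul_apply_comm (hR j) U U a b
    calc trace (R j * (U * diagonal x * Uᵀ) * R j * (U * diagonal y * Uᵀ))
        = trace (R j * U * (diagonal x * K * (diagonal y * Uᵀ))) := by
          simp only [hK, Matrix.mul_assoc]
      _ = trace (diagonal x * K * (diagonal y * K)) := by
          rw [trace_mul_comm]
          simp only [hK, Matrix.mul_assoc]
      _ = _ := by
          simp only [trace, diag_apply, mul_apply (M := diagonal x * K), diagonal_mul]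
          refine Finset.sum_congr rfl fun a _ => Finset.sum_congr rfl fun b _ => ?_
          rw [hsymm b a]
          ring
  simp only [covMap, Finset.sum_mul, trace_sum, hterm, Finset.mul_sum]
  rw [Finset.sum_comm, Finset.sum_congr rfl fun a _ => Finset.sum_comm]

lemma abs_trace_covMap_pow_mul_pow_le (hR : CovarianceBound R v s) {X : Matrix m m ℝ}
    (hX : X.IsSymm) {k l : ℕ} (hkl : Even (k + l)) :
    |trace (covMap R (X ^ k) * X ^ l)| ≤ 2 * s ^ 2 * trace (X ^ (k + l)) := by
  obtain ⟨U, w, hU, hw⟩ := exists_orthogonal_diagonalization hX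
  have htrace : trace (X ^ (k + l)) = ∑ a, |w a| ^ (k + l) := by
    rw [hw, trace_mul_comm, ← Matrix.mul_assoc, hU, Matrix.one_mul, trace_diagonal]
    exact Finset.sum_congr rfl fun a _ => (hkl.pow_abs _).symm
  set K : m → m → ℝ := fun a b => ∑ j, (Uᵀ * R j * U) a b ^ 2
  have hK (a b : m) : K a b = K b a := by
    simp only [K, transpose_mul_mul_apply_comm (hR.isSymm _) _ _ a b]
  calc |trace (covMap R (X ^ k) * X ^ l)| = |∑ a, ∑ b, w a ^ k * w b ^ l * K a b| := by
        rw [hw, hw, trace_covMap_mul_eq_sum hR.isSymm]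
    _ ≤ ∑ a, ∑ b, (|w a| ^ (k + l) + |w b| ^ (k + l)) * K a b := by
        refine (Finset.abs_sum_le_sum_abs _ _).trans (Finset.sum_le_sum fun a _ => ?_)
        refine (Finset.abs_sum_le_sum_abs _ _).trans (Finset.sum_le_sum fun b _ => ?_)
        have hK0 : 0 ≤ K a b := Finset.sum_nonneg fun j _ => sq_nonneg _
        rw [abs_mul, abs_of_nonneg hK0]
        refine mul_le_mul_of_nonneg_right ?_ hK0
        simpa [Fin.sum_univ_two, Fin.prod_univ_two] using
          abs_prod_pow_le_sum_abs_pow ![w a, w b] ![k, l]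
    _ = 2 * ∑ a, |w a| ^ (k + l) * ∑ b, K a b := by
        simp only [add_mul, Finset.sum_add_distrib, Finset.mul_sum, two_mul]
        rw [add_right_inj, Finset.sum_comm]
        simp only [hK]
    _ ≤ 2 * ∑ a, |w a| ^ (k + l) * s ^ 2 := by
        gcongr with a
        exact sum_sq_transpose_mul_mul_apply_le hR hU a
    _ = _ := by
        rw [htrace, ← Finset.sum_mul]
        ring

end TraceBounds

section GaussianMoments

variable {ι κ n : Type*} [Fintype ι] [Fintype κ]

lemma gaussianSeries_isSymm {F : κ → Matrix n n ℝ} (hF : ∀ k, (F k).IsSymm) (g : κ → ℝ) :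
    (gaussianSeries F g).IsSymm := by
  rw [IsSymm, gaussianSeries, transpose_sum]
  simp only [transpose_smul, (hF _).eq]

lemma gaussianSeries_comp_injective {E : Type*} [AddCommMonoid E] [Module ℝ E] {e : ι → κ}
    (he : Function.Injective e) {F : κ → E} (hF : ∀ k ∉ Set.range e, F k = 0) (g : κ → ℝ) :
    gaussianSeries F g = gaussianSeries (F ∘ e) (g ∘ e) :=
  (Fintype.sum_of_injective e he _ _ (fun k hk => by rw [hF k hk, smul_zero]) fun _ => rfl).symm

lemma integral_gaussianSeries_comp_injective {E E' : Type*} [AddCommMonoid E] [Module ℝ E]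
    [NormedAddCommGroup E'] [NormedSpace ℝ E'] {e : ι → κ} (he : Function.Injective e) {F : κ → E}
    (hF : ∀ k ∉ Set.range e, F k = 0) (f : E → E')
    (hf : Integrable (fun g => f (gaussianSeries (F ∘ e) g)) (gaussianProduct ι)) :
    ∫ g, f (gaussianSeries F g) ∂(gaussianProduct κ) =
      ∫ g, f (gaussianSeries (F ∘ e) g) ∂(gaussianProduct ι) := by
  have hmp := measurePreserving_comp_injective he
  rw [← hmp.map_eq] at hf ⊢
  rw [integral_map hmp.measurable.aemeasurable hf.aestronglyMeasurable]
  simp only [gaussianSeries_comp_injective he hF]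
  rfl

variable [Fintype n] [DecidableEq n]

lemma integrable_gaussianSeries_pow (F : κ → Matrix n n ℝ) (k : ℕ) :
    Integrable (fun g => gaussianSeries F g ^ k) (gaussianProduct κ) := by
  simpa using TrigPoly.integrable_evalMatrix 0 (TrigPoly.seriesMatrix F ^ k)

/-- The matrix moment `𝔼 Xᵏ` of the Gaussian series `X` with coefficients `F`. -/
noncomputable def gaussianMoment (F : κ → Matrix n n ℝ) (k : ℕ) : Matrix n n ℝ :=
  ∫ g, gaussianSeries F g ^ k ∂(gaussianProduct κ)

lemma gaussianMoment_zero (F : κ → Matrix n n ℝ) : gaussianMoment F 0 = 1 := by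
  simp [gaussianMoment]

lemma gaussianMoment_comp_injective {e : ι → κ} (he : Function.Injective e)
    {F : κ → Matrix n n ℝ} (hF : ∀ k ∉ Set.range e, F k = 0) (k : ℕ) :
    gaussianMoment F k = gaussianMoment (F ∘ e) k :=
  integral_gaussianSeries_comp_injective he hF (fun M => M ^ k) (integrable_gaussianSeries_pow _ _)

lemma gaussianMoment_sumElim_zero (F : ι → Matrix n n ℝ) (k : ℕ) :
    gaussianMoment (Sum.elim F (0 : κ → Matrix n n ℝ)) k = gaussianMoment F k :=
  gaussianMoment_comp_injective Sum.inl_injective (by rintro (i | i) hi <;> simp_all) k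

lemma gaussianMoment_zero_sumElim (F : κ → Matrix n n ℝ) (k : ℕ) :
    gaussianMoment (Sum.elim (0 : ι → Matrix n n ℝ) F) k = gaussianMoment F k :=
  gaussianMoment_comp_injective Sum.inr_injective (by rintro (i | i) hi <;> simp_all) k

lemma map_integral_matrix {Ω E : Type*} [MeasurableSpace Ω] {μ : Measure Ω}
    [NormedAddCommGroup E] [NormedSpace ℝ E] [CompleteSpace E] (L : Matrix n n ℝ →ₗ[ℝ] E)
    {φ : Ω → Matrix n n ℝ} (hφ : Integrable φ μ) : L (∫ ω, φ ω ∂μ) = ∫ ω, L (φ ω) ∂μ :=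
  (L.toContinuousLinearMap.integral_comp_comm hφ).symm

lemma trace_gaussianMoment (F : κ → Matrix n n ℝ) (k : ℕ) :
    trace (gaussianMoment F k) = ∫ g, trace (gaussianSeries F g ^ k) ∂(gaussianProduct κ) :=
  map_integral_matrix (traceLinearMap n ℝ ℝ) (integrable_gaussianSeries_pow F k)

lemma integrable_trace_gaussianSeries_pow (F : κ → Matrix n n ℝ) (k : ℕ) :
    Integrable (fun g => trace (gaussianSeries F g ^ k)) (gaussianProduct κ) :=
  (traceLinearMap n ℝ ℝ).toContinuousLinearMap.integrable_comp (integrable_gaussianSeries_pow F k)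

lemma trace_gaussianMoment_nonneg {F : κ → Matrix n n ℝ} (hF : ∀ k, (F k).IsSymm) {k : ℕ}
    (hk : Even k) : 0 ≤ trace (gaussianMoment F k) := by
  rw [trace_gaussianMoment]
  exact integral_nonneg fun g => trace_pow_nonneg_of_even (gaussianSeries_isSymm hF g) hk

end GaussianMoments

section RotatedSums

variable {ι κ S : Type*} [Fintype ι] [Fintype κ] [Ring S] [Algebra ℝ S]

lemma sum_rotatedFamily_add_pi_div_two_mul (θ : ℝ) (P : ι → S) (Q : κ → S) (a : S) :
    ∑ k, rotatedFamily (θ + Real.pi / 2) P Q k * a * rotatedFamily θ P Q k =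
      (Real.sin θ * Real.cos θ) • (covMap Q a - covMap P a) := by
  simp only [Fintype.sum_sum_type, rotatedFamily, Sum.elim_inl, Sum.elim_inr, covMap,
    Real.cos_add_pi_div_two, Real.sin_add_pi_div_two, smul_mul_assoc, mul_smul_comm, smul_smul,
    ← Finset.smul_sum, smul_sub]
  rw [mul_neg, neg_smul, mul_comm (Real.cos θ), neg_add_eq_sub]

lemma sum_rotatedFamily_mul (θ : ℝ) (F : κ → S) (a : S) :
    ∑ k, rotatedFamily θ F F k * a * rotatedFamily (θ + Real.pi / 2) F F k = 0 := by
  simp only [Fintype.sum_sum_type, rotatedFamily, Sum.elim_inl, Sum.elim_inr,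
    Real.cos_add_pi_div_two, Real.sin_add_pi_div_two, smul_mul_assoc, mul_smul_comm, smul_smul,
    ← Finset.smul_sum]
  rw [neg_mul, neg_smul, mul_comm (Real.cos θ), neg_add_cancel]

lemma sum_sumElim_zero_mul_rotatedFamily (θ : ℝ) (F : κ → S) (a : S) :
    ∑ k, (Sum.elim F 0 : κ ⊕ κ → S) k * a *
      rotatedFamily (θ + Real.pi / 2) F F k = -Real.sin θ • covMap F a := by
  simp [rotatedFamily, covMap, Real.cos_add_pi_div_two, Finset.smul_sum]

end RotatedSums

section IntegrationByParts

lemma map_covMap {ι S T G : Type*} [Fintype ι] [NonUnitalNonAssocSemiring S]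
    [NonUnitalNonAssocSemiring T] [FunLike G S T] [NonUnitalRingHomClass G S T] (f : G)
    (R : ι → S) (a : S) : f (covMap R a) = covMap (fun j => f (R j)) (f a) := by
  simp only [covMap, map_sum, map_mul]

variable {ι κ n : Type*} [Fintype n] [DecidableEq n]

namespace TrigPoly

lemma trace_evalMatrix_map_derivation_pow (D : Derivation ℝ (TrigPoly κ) (TrigPoly κ)) (θ : ℝ)
    (g : κ → ℝ) (M : Matrix n n (TrigPoly κ)) (k : ℕ) :
    trace (evalMatrix θ g ((M ^ (k + 1)).map D)) =
      (k + 1) * trace (evalMatrix θ g (M.map D) * evalMatrix θ g M ^ k) := by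
  have hterm : ∀ i ∈ Finset.range (k + 1), trace (evalMatrix θ g (M ^ i * M.map D * M ^ (k - i))) =
      trace (evalMatrix θ g (M.map D) * evalMatrix θ g M ^ k) := by
    intro i hi
    rw [map_mul, map_mul, trace_mul_cycle, ← map_mul, ← pow_add,
      Nat.sub_add_cancel (Nat.lt_succ_iff.1 (Finset.mem_range.1 hi)), trace_mul_comm, map_pow]
  rw [map_derivation_pow, map_sum, trace_sum, Nat.add_sub_cancel, Finset.sum_congr rfl hterm]
  simp

variable [Fintype ι]

lemma evalMatrix_covMap_constMatrix (θ : ℝ) (g : κ → ℝ) (R : ι → Matrix n n ℝ)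
    (M : Matrix n n (TrigPoly κ)) :
    evalMatrix θ g (covMap (fun j => constMatrix (R j)) M) = covMap R (evalMatrix θ g M) := by
  simp only [map_covMap, evalMatrix_constMatrix]

lemma map_derivation_covMap_constMatrix (D : Derivation ℝ (TrigPoly κ) (TrigPoly κ))
    (R : ι → Matrix n n ℝ) (M : Matrix n n (TrigPoly κ)) :
    (covMap (fun j => constMatrix (R j)) M).map D =
      covMap (fun j => constMatrix (R j)) (M.map D) := by
  rw [covMap, ← D.coeFn_coe, ← LinearMap.mapMatrix_apply, map_sum]
  refine Finset.sum_congr rfl fun j _ => ?_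
  simp only [LinearMap.mapMatrix_apply, D.coeFn_coe, map_derivation_mul,
    map_derivation_constMatrix, Matrix.zero_mul, zero_add, Matrix.mul_zero, add_zero]

lemma integral_gaussianSeries_mul_evalMatrix_pow [Fintype κ] (θ : ℝ)
    (F : κ → Matrix n n ℝ) (M : Matrix n n (TrigPoly κ)) (k : ℕ) :
    ∫ g, gaussianSeries F g * evalMatrix θ g M ^ k ∂(gaussianProduct κ) =
      ∫ g, ∑ i ∈ Finset.range k,
        (∑ j, F j * evalMatrix θ g M ^ i * evalMatrix θ g (M.map (partialDeriv j))) *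
          evalMatrix θ g M ^ (k - 1 - i) ∂(gaussianProduct κ) := by
  have h := integral_evalMatrix_mul_gaussianSeries_mul θ F (constMatrix 1) (M ^ k)
  simp only [evalMatrix_constMatrix, Matrix.one_mul, map_derivation_constMatrix, map_zero,
    Matrix.zero_mul, zero_add, map_pow, map_derivation_pow, map_sum, map_mul] at h
  rw [h]
  congr 1 with g : 1
  simp only [Finset.mul_sum, Finset.sum_mul, Matrix.mul_assoc]
  exact Finset.sum_comm

end TrigPoly

open TrigPoly

variable [Fintype ι] [Fintype κ]

/-- The matrix `𝔼 (∑ⱼ Rⱼ Xᵏ Rⱼ) Xˡ` for the Gaussian series `X` with coefficients `F`. -/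
noncomputable def covMoment (R : ι → Matrix n n ℝ) (F : κ → Matrix n n ℝ) (k l : ℕ) :
    Matrix n n ℝ :=
  ∫ g, covMap R (gaussianSeries F g ^ k) * gaussianSeries F g ^ l ∂(gaussianProduct κ)

lemma integrable_covMap_pow_mul_pow (R : ι → Matrix n n ℝ) (F : κ → Matrix n n ℝ) (i j : ℕ) :
    Integrable (fun g => covMap R (gaussianSeries F g ^ i) * gaussianSeries F g ^ j)
      (gaussianProduct κ) := by
  simpa [evalMatrix_covMap_constMatrix] using integrable_evalMatrix 0
    (covMap (fun j => constMatrix (R j)) (seriesMatrix F ^ i) * seriesMatrix F ^ j)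

lemma gaussianMoment_succ (F : κ → Matrix n n ℝ) (k : ℕ) :
    gaussianMoment F (k + 1) = ∑ i ∈ Finset.range k, covMoment F F i (k - 1 - i) := by
  have h := integral_gaussianSeries_mul_evalMatrix_pow 0 F (seriesMatrix F) k
  simp only [partialDeriv_seriesMatrix, evalMatrix_constMatrix, evalMatrix_seriesMatrix,
    ← pow_succ'] at h
  rw [gaussianMoment, h]
  exact integral_finsetSum _ fun i _ => integrable_covMap_pow_mul_pow F F i _

lemma integrable_rotatedFamily_add_pi_div_two_mul_pow (P : ι → Matrix n n ℝ)
    (Q : κ → Matrix n n ℝ) (k : ℕ) (θ : ℝ) :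
    Integrable (fun g => gaussianSeries (rotatedFamily (θ + Real.pi / 2) P Q) g *
      gaussianSeries (rotatedFamily θ P Q) g ^ k) (gaussianProduct (ι ⊕ κ)) := by
  simpa [evalMatrix_angleDeriv_rotatedMatrix] using
    integrable_evalMatrix θ ((rotatedMatrix P Q).map angleDeriv * rotatedMatrix P Q ^ k)

lemma integral_rotatedFamily_add_pi_div_two_mul_pow (P : ι → Matrix n n ℝ) (Q : κ → Matrix n n ℝ)
    (k : ℕ) (θ : ℝ) :
    ∫ g, gaussianSeries (rotatedFamily (θ + Real.pi / 2) P Q) g *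
        gaussianSeries (rotatedFamily θ P Q) g ^ k ∂(gaussianProduct (ι ⊕ κ)) =
      (Real.sin θ * Real.cos θ) • ∑ i ∈ Finset.range k,
        (covMoment Q (rotatedFamily θ P Q) i (k - 1 - i) -
          covMoment P (rotatedFamily θ P Q) i (k - 1 - i)) := by
  have h := integral_gaussianSeries_mul_evalMatrix_pow θ (rotatedFamily (θ + Real.pi / 2) P Q)
    (rotatedMatrix P Q) k
  simp only [evalMatrix_partialDeriv_rotatedMatrix, evalMatrix_rotatedMatrix,
    sum_rotatedFamily_add_pi_div_two_mul, Matrix.smul_mul, Matrix.sub_mul, ← Finset.smul_sum] at h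
  rw [h, integral_smul]
  congr 1
  refine (integral_finsetSum _ fun i _ => ?_).trans (Finset.sum_congr rfl fun i _ =>
    integral_sub (integrable_covMap_pow_mul_pow Q _ i _) (integrable_covMap_pow_mul_pow P _ i _))
  exact (integrable_covMap_pow_mul_pow Q _ i _).sub (integrable_covMap_pow_mul_pow P _ i _)

lemma hasDerivAt_trace_gaussianMoment_rotatedFamily (P : ι → Matrix n n ℝ) (Q : κ → Matrix n n ℝ)
    (k : ℕ) (θ : ℝ) :
    HasDerivAt (fun t => trace (gaussianMoment (rotatedFamily t P Q) (k + 1)))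
      ((k + 1) * (Real.sin θ * Real.cos θ) * ∑ i ∈ Finset.range k,
        (trace (covMoment Q (rotatedFamily θ P Q) i (k - 1 - i)) -
          trace (covMoment P (rotatedFamily θ P Q) i (k - 1 - i)))) θ := by
  have hderiv := (traceLinearMap n ℝ ℝ).toContinuousLinearMap.hasFDerivAt.comp_hasDerivAt θ
    (hasDerivAt_integral_evalMatrix θ (rotatedMatrix P Q ^ (k + 1)))
  simp only [map_pow, evalMatrix_rotatedMatrix] at hderiv
  refine hderiv.congr_deriv ?_
  calc trace (∫ g, evalMatrix θ g ((rotatedMatrix P Q ^ (k + 1)).map angleDeriv)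
        ∂(gaussianProduct (ι ⊕ κ)))
      = (k + 1) * trace (∫ g, gaussianSeries (rotatedFamily (θ + Real.pi / 2) P Q) g *
          gaussianSeries (rotatedFamily θ P Q) g ^ k ∂(gaussianProduct (ι ⊕ κ))) := by
        rw [← traceLinearMap_apply n ℝ ℝ, ← traceLinearMap_apply n ℝ ℝ,
          map_integral_matrix _ (integrable_evalMatrix θ _),
          map_integral_matrix _ (integrable_rotatedFamily_add_pi_div_two_mul_pow P Q k θ),
          ← integral_const_mul]
        simp only [traceLinearMap_apply, trace_evalMatrix_map_derivation_pow,
          evalMatrix_angleDeriv_rotatedMatrix, evalMatrix_rotatedMatrix]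
    _ = _ := by
        simp only [integral_rotatedFamily_add_pi_div_two_mul_pow, trace_smul, trace_sum,
          trace_sub, smul_eq_mul, mul_assoc]

lemma trace_gaussianMoment_rotatedFamily_self (F : κ → Matrix n n ℝ) (k : ℕ) (θ : ℝ) :
    trace (gaussianMoment (rotatedFamily θ F F) k) = trace (gaussianMoment F k) := by
  rcases k with _ | k
  · simp only [gaussianMoment_zero]
  · have hconst := is_const_of_deriv_eq_zero
      (fun t => (hasDerivAt_trace_gaussianMoment_rotatedFamily F F k t).differentiableAt)
      (fun t => by simp [(hasDerivAt_trace_gaussianMoment_rotatedFamily F F k t).deriv]) θ 0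
    rw [hconst, rotatedFamily_zero, gaussianMoment_sumElim_zero]

end IntegrationByParts

section Decoupling

lemma crossing_eq_sum_covMap {ι κ S : Type*} [Fintype ι] [Fintype κ] [Ring S] (R : ι → S)
    (F : κ → S) (a b c d : S) :
    crossing R F a b c d = ∑ j, R j * a * covMap F (b * R j * c) * d := by
  simp only [crossing, covMap, Finset.mul_sum, Finset.sum_mul, mul_assoc]

lemma covMap_sum {α ι S : Type*} [Fintype ι] [NonUnitalNonAssocSemiring S] (R : ι → S)
    (t : Finset α) (f : α → S) : covMap R (∑ a ∈ t, f a) = ∑ a ∈ t, covMap R (f a) := by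
  simp only [covMap, Finset.mul_sum, Finset.sum_mul]
  exact Finset.sum_comm

section RotatedSums

variable {α ι κ S : Type*} [Fintype κ] [Ring S] [Algebra ℝ S]

lemma sum_mul_sum_rotatedFamily_mul (θ : ℝ) (F : κ → S) (t : Finset α) (p q : α → S) (c d : S) :
    ∑ k, c * (∑ a ∈ t, p a * rotatedFamily θ F F k * q a) *
      rotatedFamily (θ + Real.pi / 2) F F k * d = 0 := by
  have hterm (a : α) : ∑ k, c * (p a * rotatedFamily θ F F k * q a) *
      rotatedFamily (θ + Real.pi / 2) F F k * d = 0 := by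
    rw [← mul_zero (c * p a), ← zero_mul d, ← mul_assoc, ← sum_rotatedFamily_mul θ F (q a)]
    simp only [Finset.mul_sum, Finset.sum_mul, mul_assoc]
  simp only [Finset.mul_sum, Finset.sum_mul]
  rw [Finset.sum_comm]
  exact Finset.sum_eq_zero fun a _ => hterm a

lemma sum_mul_rotatedFamily_mul_sum (θ : ℝ) (F : κ → S) (t : Finset α) (p q : α → S) (c : S) :
    ∑ k, c * rotatedFamily (θ + Real.pi / 2) F F k *
      ∑ a ∈ t, p a * rotatedFamily θ F F k * q a = 0 := by
  have hterm (a : α) : ∑ k, c * rotatedFamily (θ + Real.pi / 2) F F k *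
      (p a * rotatedFamily θ F F k * q a) = 0 := by
    have h := sum_rotatedFamily_add_pi_div_two_mul θ F F (p a)
    rw [sub_self, smul_zero] at h
    rw [← mul_zero c, ← zero_mul (q a), ← h]
    simp only [Finset.mul_sum, Finset.sum_mul, mul_assoc]
  simp only [Finset.mul_sum]
  rw [Finset.sum_comm]
  exact Finset.sum_eq_zero fun a _ => hterm a

lemma sum_covMap_mul_rotatedFamily [Fintype ι]
    (θ : ℝ) (R : ι → S) (F : κ → S) (a b c d : S) :
    ∑ k, covMap R (a * (Sum.elim F 0 : κ ⊕ κ → S) k * b) * c *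
        rotatedFamily (θ + Real.pi / 2) F F k * d =
      -Real.sin θ • crossing R F a b c d := by
  have hterm (j : ι) : ∑ k, R j * (a * (Sum.elim F 0 : κ ⊕ κ → S) k * b) * R j * c *
      rotatedFamily (θ + Real.pi / 2) F F k * d =
      R j * a * (-Real.sin θ • covMap F (b * R j * c)) * d := by
    rw [← sum_sumElim_zero_mul_rotatedFamily]
    simp only [Finset.mul_sum, Finset.sum_mul, mul_assoc]
  simp only [crossing_eq_sum_covMap, covMap, Finset.sum_mul] at hterm ⊢
  rw [Finset.sum_comm, Finset.smul_sum]
  refine Finset.sum_congr rfl fun j _ => ?_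
  rw [hterm, mul_smul_comm, smul_mul_assoc]

end RotatedSums

variable {ι κ n : Type*} [Fintype ι] [Fintype κ] [Fintype n] [DecidableEq n]

open TrigPoly

/-- `𝔼 (∑ⱼ Rⱼ Xᵏ Rⱼ) X_θˡ`, where `X_θ` is the copy of `X` obtained by rotating `X` by the angle
`θ` towards an independent copy: it joins `covMoment R F k l` at `θ = 0` to the decoupled product
at `θ = π / 2`. -/
noncomputable def rotatedCovMoment (R : ι → Matrix n n ℝ) (F : κ → Matrix n n ℝ) (k l : ℕ)
    (θ : ℝ) : Matrix n n ℝ :=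
  ∫ g, covMap R (gaussianSeries (Sum.elim F 0) g ^ k) *
    gaussianSeries (rotatedFamily θ F F) g ^ l ∂(gaussianProduct (κ ⊕ κ))

lemma rotatedCovMoment_zero (R : ι → Matrix n n ℝ) (F : κ → Matrix n n ℝ) (k l : ℕ) :
    rotatedCovMoment R F k l 0 = covMoment R F k l := by
  rw [rotatedCovMoment, rotatedFamily_zero]
  exact integral_gaussianSeries_comp_injective (e := Sum.inl) Sum.inl_injective
    (by rintro (i | i) hi <;> simp_all) (fun M => covMap R (M ^ k) * M ^ l)
    (integrable_covMap_pow_mul_pow R F k l)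

lemma gaussianSeries_sumElim {ι E : Type*} [Fintype ι] [AddCommMonoid E] [Module ℝ E] (P : ι → E)
    (Q : κ → E) (g : ι ⊕ κ → ℝ) :
    gaussianSeries (Sum.elim P Q) g =
      gaussianSeries P (fun i => g (Sum.inl i)) + gaussianSeries Q (fun k => g (Sum.inr k)) :=
  Fintype.sum_sum_type _

lemma integral_covMap_mul_of_indep (R : ι → Matrix n n ℝ) {φ ψ : (κ → ℝ) → Matrix n n ℝ}
    (hφ : Integrable φ (gaussianProduct κ)) (hψ : Integrable ψ (gaussianProduct κ)) :
    ∫ g, covMap R (φ fun k => g (Sum.inl k)) * ψ (fun k => g (Sum.inr k))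
        ∂(gaussianProduct (κ ⊕ κ)) =
      covMap R (∫ g, φ g ∂(gaussianProduct κ)) * ∫ g, ψ g ∂(gaussianProduct κ) := by
  let B := (ContinuousLinearMap.mul ℝ (Matrix n n ℝ)).comp
    (∑ j, ContinuousLinearMap.mulLeftRight ℝ (Matrix n n ℝ) (R j) (R j))
  have hB (M M' : Matrix n n ℝ) : B M M' = covMap R M * M' := by
    simp [B, covMap, Finset.sum_mul]
  have hmp := measurePreserving_sumPiEquivProdPi (fun _ : κ ⊕ κ => gaussianReal 0 1)
  simp only [← hB]
  rw [← integral_prod_bilin B hφ hψ]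
  exact hmp.integral_comp' (fun z : (κ → ℝ) × (κ → ℝ) => B (φ z.1) (ψ z.2))

lemma rotatedCovMoment_pi_div_two (R : ι → Matrix n n ℝ) (F : κ → Matrix n n ℝ) (k l : ℕ) :
    rotatedCovMoment R F k l (Real.pi / 2) =
      covMap R (gaussianMoment F k) * gaussianMoment F l := by
  have h := integral_covMap_mul_of_indep R (integrable_gaussianSeries_pow F k)
    (integrable_gaussianSeries_pow F l)
  simp only [rotatedCovMoment, rotatedFamily_pi_div_two, gaussianSeries_sumElim]
  simpa [gaussianSeries, gaussianMoment] using h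

lemma integrable_crossing_rotatedFamily (R : ι → Matrix n n ℝ) (F : κ → Matrix n n ℝ)
    (a b c d : ℕ) (θ : ℝ) :
    Integrable (fun g => crossing R F (gaussianSeries (Sum.elim F 0) g ^ a)
      (gaussianSeries (Sum.elim F 0) g ^ b) (gaussianSeries (rotatedFamily θ F F) g ^ c)
      (gaussianSeries (rotatedFamily θ F F) g ^ d)) (gaussianProduct (κ ⊕ κ)) := by
  have h := integrable_evalMatrix θ (crossing (fun j => constMatrix (R j))
    (fun k => constMatrix (F k)) (seriesMatrix (Sum.elim F 0) ^ a)
    (seriesMatrix (Sum.elim F 0) ^ b) (rotatedMatrix F F ^ c) (rotatedMatrix F F ^ d))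
  simpa only [crossing, map_sum, map_mul, map_pow, evalMatrix_constMatrix,
    evalMatrix_seriesMatrix, evalMatrix_rotatedMatrix] using h

lemma integral_covMap_mul_rotatedFamily_mul (R : ι → Matrix n n ℝ) (F : κ → Matrix n n ℝ)
    (k i j : ℕ) (θ : ℝ) :
    ∫ g, covMap R (gaussianSeries (Sum.elim F 0) g ^ k) *
        gaussianSeries (rotatedFamily θ F F) g ^ i *
        gaussianSeries (rotatedFamily (θ + Real.pi / 2) F F) g *
        gaussianSeries (rotatedFamily θ F F) g ^ j ∂(gaussianProduct (κ ⊕ κ)) =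
      -Real.sin θ • ∑ a ∈ Finset.range k, ∫ g, crossing R F
        (gaussianSeries (Sum.elim F 0) g ^ a) (gaussianSeries (Sum.elim F 0) g ^ (k - 1 - a))
        (gaussianSeries (rotatedFamily θ F F) g ^ i) (gaussianSeries (rotatedFamily θ F F) g ^ j)
        ∂(gaussianProduct (κ ⊕ κ)) := by
  have h := integral_evalMatrix_mul_gaussianSeries_mul θ (rotatedFamily (θ + Real.pi / 2) F F)
    (covMap (fun j => constMatrix (R j)) (seriesMatrix (Sum.elim F 0) ^ k) *
      rotatedMatrix F F ^ i) (rotatedMatrix F F ^ j)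
  simp only [map_derivation_mul, map_derivation_covMap_constMatrix, map_derivation_pow, map_add,
    map_mul, evalMatrix_covMap_constMatrix, map_sum, map_pow, partialDeriv_seriesMatrix,
    evalMatrix_constMatrix, evalMatrix_partialDeriv_rotatedMatrix, evalMatrix_seriesMatrix,
    evalMatrix_rotatedMatrix, Matrix.add_mul, Finset.sum_add_distrib] at h
  -- `X_θ` is independent of its derivative, so differentiating its powers contributes nothing
  simp only [sum_mul_sum_rotatedFamily_mul, sum_mul_rotatedFamily_mul_sum, add_zero,
    covMap_sum, Finset.sum_mul] at h
  rw [h, ← integral_finsetSum _ fun a _ => integrable_crossing_rotatedFamily R F a _ i j θ,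
    ← integral_smul]
  congr 1 with g : 1
  rw [Finset.sum_comm, Finset.smul_sum]
  exact Finset.sum_congr rfl fun a _ => sum_covMap_mul_rotatedFamily θ R F _ _ _ _

lemma hasDerivAt_rotatedCovMoment (R : ι → Matrix n n ℝ) (F : κ → Matrix n n ℝ)
    (k l : ℕ) (θ : ℝ) :
    HasDerivAt (rotatedCovMoment R F k l) (-Real.sin θ • ∑ i ∈ Finset.range l,
      ∑ a ∈ Finset.range k, ∫ g, crossing R F (gaussianSeries (Sum.elim F 0) g ^ a)
        (gaussianSeries (Sum.elim F 0) g ^ (k - 1 - a))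
        (gaussianSeries (rotatedFamily θ F F) g ^ i)
        (gaussianSeries (rotatedFamily θ F F) g ^ (l - 1 - i)) ∂(gaussianProduct (κ ⊕ κ))) θ := by
  have h := hasDerivAt_integral_evalMatrix θ (covMap (fun j => constMatrix (R j))
    (seriesMatrix (Sum.elim F 0) ^ k) * rotatedMatrix F F ^ l)
  simp only [map_mul, map_pow, evalMatrix_covMap_constMatrix, evalMatrix_seriesMatrix,
    evalMatrix_rotatedMatrix] at h
  refine h.congr_deriv ?_
  have hcov : (covMap (fun j => (constMatrix (R j) : Matrix n n (TrigPoly (κ ⊕ κ))))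
      (seriesMatrix (Sum.elim F 0) ^ k)).map angleDeriv = 0 := by
    rw [map_derivation_covMap_constMatrix, map_derivation_pow, angleDeriv_seriesMatrix]
    simp [covMap]
  have hterm (i : ℕ) : Integrable (fun g => covMap R (gaussianSeries (Sum.elim F 0) g ^ k) *
      gaussianSeries (rotatedFamily θ F F) g ^ i *
      gaussianSeries (rotatedFamily (θ + Real.pi / 2) F F) g *
      gaussianSeries (rotatedFamily θ F F) g ^ (l - 1 - i)) (gaussianProduct (κ ⊕ κ)) := by
    have := integrable_evalMatrix θ (covMap (fun j => constMatrix (R j))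
      (seriesMatrix (Sum.elim F 0) ^ k) * rotatedMatrix F F ^ i *
        (rotatedMatrix F F).map angleDeriv * rotatedMatrix F F ^ (l - 1 - i))
    simpa only [map_mul, map_pow, evalMatrix_covMap_constMatrix, evalMatrix_seriesMatrix,
      evalMatrix_rotatedMatrix, evalMatrix_angleDeriv_rotatedMatrix] using this
  simp only [map_derivation_mul, hcov, Matrix.zero_mul, zero_add, map_derivation_pow, map_mul,
    map_sum, map_pow, evalMatrix_covMap_constMatrix, evalMatrix_seriesMatrix,
    evalMatrix_rotatedMatrix, evalMatrix_angleDeriv_rotatedMatrix, Finset.mul_sum,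
    ← Matrix.mul_assoc]
  rw [integral_finsetSum _ fun i _ => hterm i, Finset.smul_sum]
  exact Finset.sum_congr rfl fun i _ => integral_covMap_mul_rotatedFamily_mul R F k i _ θ

variable {E : Type*} [NormedAddCommGroup E] [NormedSpace ℝ E] [CompleteSpace E]

lemma norm_map_integral_crossing_le (R : ι → Matrix n n ℝ) {F : κ → Matrix n n ℝ}
    (hF : ∀ k, (F k).IsSymm) (L : Matrix n n ℝ →ₗ[ℝ] E) {q i₁ i₂ j₁ j₂ : ℕ} {a b : ℝ}
    (hL : ∀ {U V : Matrix n n ℝ}, U.IsSymm → V.IsSymm →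
      ‖L (crossing R F (U ^ i₁) (U ^ i₂) (V ^ j₁) (V ^ j₂))‖ ≤
        a + b * (trace (U ^ q) + trace (V ^ q))) (θ : ℝ) :
    ‖L (∫ g, crossing R F (gaussianSeries (Sum.elim F 0) g ^ i₁)
        (gaussianSeries (Sum.elim F 0) g ^ i₂) (gaussianSeries (rotatedFamily θ F F) g ^ j₁)
        (gaussianSeries (rotatedFamily θ F F) g ^ j₂) ∂(gaussianProduct (κ ⊕ κ)))‖ ≤
      a + 2 * b * trace (gaussianMoment F q) := by
  have hU (k) : ((Sum.elim F 0 : κ ⊕ κ → Matrix n n ℝ) k).IsSymm := by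
    rcases k with k | _
    exacts [hF k, isSymm_zero]
  have hV (k) : (rotatedFamily θ F F k).IsSymm := by
    rcases k with k | k
    exacts [(hF k).smul _, (hF k).smul _]
  have hintU := integrable_trace_gaussianSeries_pow (Sum.elim F 0 : κ ⊕ κ → Matrix n n ℝ) q
  have hintV := integrable_trace_gaussianSeries_pow (rotatedFamily θ F F) q
  rw [map_integral_matrix L (integrable_crossing_rotatedFamily R F _ _ _ _ θ)]
  refine (norm_integral_le_of_norm_le
    ((integrable_const a).add ((hintU.add hintV).const_mul b)) (ae_of_all _ fun g =>
      hL (gaussianSeries_isSymm hU g) (gaussianSeries_isSymm hV g))).trans_eq ?_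
  rw [integral_add' (integrable_const a) ((hintU.add hintV).const_mul b), integral_const_mul,
    integral_add' hintU hintV, ← trace_gaussianMoment, ← trace_gaussianMoment,
    gaussianMoment_sumElim_zero, trace_gaussianMoment_rotatedFamily_self, integral_const,
    probReal_univ, one_smul]
  ring

/-- The derivative of the rotation of `X` towards an independent copy only involves crossings. -/
lemma norm_map_covMoment_sub_le (R : ι → Matrix n n ℝ) {F : κ → Matrix n n ℝ}
    (hF : ∀ k, (F k).IsSymm) (L : Matrix n n ℝ →ₗ[ℝ] E) {k l q : ℕ} {a b : ℝ}
    (hL : ∀ {U V : Matrix n n ℝ}, U.IsSymm → V.IsSymm → ∀ i₁ i₂ j₁ j₂, i₁ + i₂ + 1 = k →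
      j₁ + j₂ + 1 = l → ‖L (crossing R F (U ^ i₁) (U ^ i₂) (V ^ j₁) (V ^ j₂))‖ ≤
        a + b * (trace (U ^ q) + trace (V ^ q))) :
    ‖L (covMoment R F k l) - L (covMap R (gaussianMoment F k) * gaussianMoment F l)‖ ≤
      Real.pi / 2 * (k * l * (a + 2 * b * trace (gaussianMoment F q))) := by
  set C := k * l * (a + 2 * b * trace (gaussianMoment F q)) with hC
  have hderiv (θ : ℝ) : HasDerivAt (fun t => L (rotatedCovMoment R F k l t)) _ θ :=
    L.toContinuousLinearMap.hasFDerivAt.comp_hasDerivAt θ (hasDerivAt_rotatedCovMoment R F k l θ)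
  have hbound (θ : ℝ) : ‖L (-Real.sin θ • ∑ i ∈ Finset.range l, ∑ j ∈ Finset.range k,
      ∫ g, crossing R F (gaussianSeries (Sum.elim F 0) g ^ j)
        (gaussianSeries (Sum.elim F 0) g ^ (k - 1 - j))
        (gaussianSeries (rotatedFamily θ F F) g ^ i)
        (gaussianSeries (rotatedFamily θ F F) g ^ (l - 1 - i))
        ∂(gaussianProduct (κ ⊕ κ)))‖ ≤ C := by
    rw [map_smul, norm_smul, norm_neg, Real.norm_eq_abs]
    refine (mul_le_of_le_one_left (norm_nonneg _) (Real.abs_sin_le_one θ)).trans ?_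
    simp only [map_sum]
    refine (norm_sum_le_of_le _ fun i hi => norm_sum_le_of_le _ fun j hj =>
      norm_map_integral_crossing_le R hF L (q := q) (a := a) (b := b) (fun hU hV =>
        hL hU hV j (k - 1 - j) i (l - 1 - i) ?_ ?_) θ).trans_eq ?_
    · have := Finset.mem_range.1 hj; omega
    · have := Finset.mem_range.1 hi; omega
    · simp only [Finset.sum_const, Finset.card_range, nsmul_eq_mul, hC]
      ring
  have hmvt := convex_univ.norm_image_sub_le_of_norm_hasDerivWithin_le
    (fun θ _ => (hderiv θ).hasDerivWithinAt) (fun θ _ => hbound θ)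
    (Set.mem_univ (Real.pi / 2)) (Set.mem_univ 0)
  rwa [rotatedCovMoment_zero, rotatedCovMoment_pi_div_two, zero_sub, norm_neg, Real.norm_of_nonneg
    (by positivity), mul_comm] at hmvt

end Decoupling

section Symmetries

/-- The map `f` permutes the family `F` up to signs, hence preserves the law of the Gaussian series
with coefficients `F`. -/
def PermutesUpToSign {κ E : Type*} [SMul ℝ E] (f : E → E) (F : κ → E) : Prop :=
  ∃ (e : Equiv.Perm κ) (s : κ → ℝ), (∀ k, s k = 1 ∨ s k = -1) ∧ ∀ k, f (F k) = s k • F (e k)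

lemma PermutesUpToSign.rotatedFamily {ι κ E G : Type*} [AddCommMonoid E] [Module ℝ E]
    [FunLike G E E] [MulActionSemiHomClass G (id : ℝ → ℝ) E E] {f : G} {P : ι → E} {Q : κ → E}
    (hP : PermutesUpToSign f P) (hQ : PermutesUpToSign f Q) (θ : ℝ) :
    PermutesUpToSign f (rotatedFamily θ P Q) := by
  obtain ⟨e, s, hs, hf⟩ := hP
  obtain ⟨e', s', hs', hf'⟩ := hQ
  refine ⟨Equiv.sumCongr e e', Sum.elim s s', Sum.rec hs hs', Sum.rec (fun i => ?_) fun k => ?_⟩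
  · simp [MatrixConcentration.rotatedFamily, map_smul, hf, smul_comm (s i)]
  · simp [MatrixConcentration.rotatedFamily, map_smul, hf', smul_comm (s' k)]

variable {n : Type*} [Fintype n] [DecidableEq n]

section Moments

variable {ι κ : Type*} [Fintype ι] [Fintype κ]

lemma gaussianMoment_comp_equiv (e : ι ≃ κ) (F : κ → Matrix n n ℝ) (k : ℕ) :
    gaussianMoment (F ∘ e) k = gaussianMoment F k :=
  (gaussianMoment_comp_injective e.injective (fun k hk => absurd (e.surjective k) hk) k).symm

lemma gaussianMoment_sign_smul {s : κ → ℝ} (hs : ∀ k, s k = 1 ∨ s k = -1)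
    (F : κ → Matrix n n ℝ) (k : ℕ) :
    gaussianMoment (fun j => s j • F j) k = gaussianMoment F k := by
  have hmp := measurePreserving_mul_sign hs
  have hseries (g : κ → ℝ) :
      gaussianSeries (fun j => s j • F j) g = gaussianSeries F (fun j => s j * g j) := by
    simp only [gaussianSeries, smul_smul, mul_comm]
  have hint := (integrable_gaussianSeries_pow F k).aestronglyMeasurable
  rw [← hmp.map_eq] at hint
  simp only [gaussianMoment, hseries]
  rw [← integral_map hmp.measurable.aemeasurable hint, hmp.map_eq]

lemma gaussianMoment_of_odd (F : κ → Matrix n n ℝ) {k : ℕ} (hk : Odd k) :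
    gaussianMoment F k = 0 := by
  have hneg : -gaussianMoment F k = gaussianMoment F k := by
    simpa [gaussianMoment, gaussianSeries, hk.neg_pow, integral_neg] using
      gaussianMoment_sign_smul (s := fun _ => -1) (fun _ => Or.inr rfl) F k
  ext i j
  exact self_eq_neg.1 (congrFun₂ hneg i j).symm

lemma map_gaussianMoment (f : Matrix n n ℝ →ₐ[ℝ] Matrix n n ℝ) (F : κ → Matrix n n ℝ) (k : ℕ) :
    f (gaussianMoment F k) = gaussianMoment (f ∘ F) k := by
  refine (map_integral_matrix f.toLinearMap (integrable_gaussianSeries_pow F k)).trans ?_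
  simp [gaussianMoment, gaussianSeries]

lemma PermutesUpToSign.map_gaussianMoment {f : Matrix n n ℝ →ₐ[ℝ] Matrix n n ℝ}
    {F : κ → Matrix n n ℝ} (h : PermutesUpToSign f F) (k : ℕ) :
    f (gaussianMoment F k) = gaussianMoment F k := by
  obtain ⟨e, s, hs, hf⟩ := h
  rw [MatrixConcentration.map_gaussianMoment, show f ∘ F = fun j => s j • (F ∘ e) j from funext hf,
    gaussianMoment_sign_smul hs, gaussianMoment_comp_equiv]

end Moments

/-- Conjugation by the signed permutation matrix with permutation `e` and signs `ε`. -/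
def signedConj {ε : n → ℝ} (hε : ∀ i, ε i = 1 ∨ ε i = -1) (e : Equiv.Perm n) :
    Matrix n n ℝ →ₐ[ℝ] Matrix n n ℝ :=
  have hε_sq (i : n) : ε i * ε i = 1 := by rcases hε i with h | h <;> simp [h]
  AlgHom.ofLinearMap
    { toFun M := of fun i j => ε i * M (e i) (e j) * ε j
      map_add' M N := by ext; simp [mul_add, add_mul]
      map_smul' c M := by ext; simp [mul_left_comm, mul_assoc] }
    (by
      ext i j
      rcases eq_or_ne i j with rfl | hij
      · simp [hε_sq]
      · simp [one_apply, hij])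
    (fun M N => by
      ext i j
      simp only [LinearMap.coe_mk, AddHom.coe_mk, of_apply, mul_apply, Finset.mul_sum,
        Finset.sum_mul]
      rw [← Equiv.sum_comp e]
      refine Finset.sum_congr rfl fun l _ => ?_
      linear_combination -(ε i * M (e i) (e l) * N (e l) (e j) * ε j) * hε_sq l)

lemma signedConj_apply {ε : n → ℝ} (hε : ∀ i, ε i = 1 ∨ ε i = -1) (e : Equiv.Perm n)
    (M : Matrix n n ℝ) (i j : n) : signedConj hε e M i j = ε i * M (e i) (e j) * ε j := rfl

lemma signedConj_single {ε : n → ℝ} (hε : ∀ i, ε i = 1 ∨ ε i = -1) (e : Equiv.Perm n) (a b : n) :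
    signedConj hε e (single a b 1) =
      (ε (e.symm a) * ε (e.symm b)) • single (e.symm a) (e.symm b) 1 := by
  ext i j
  simp only [signedConj_apply, single_apply, Matrix.smul_apply, smul_eq_mul, ← Equiv.symm_apply_eq]
  split_ifs with h
  · rw [h.1, h.2, mul_one, mul_one]
  · simp

end Symmetries

section TensorFamilies

open Kronecker

/-- The family of all Kronecker products of a member of `A` and a member of `H`. -/
def tensorFamily {ι κ m ν : Type*} (A : ι → Matrix m m ℝ) (H : κ → Matrix ν ν ℝ) (p : ι × κ) :
    Matrix (m × ν) (m × ν) ℝ :=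
  A p.1 ⊗ₖ H p.2

variable {ι κ m ν : Type*} [Fintype m] [Fintype ν]

lemma trace_kronecker_mul (M : Matrix m m ℝ) (N : Matrix ν ν ℝ)
    (B : Matrix (m × ν) (m × ν) ℝ) :
    trace ((M ⊗ₖ N) * B) =
      trace (M * of fun i j => trace (N * B.submatrix (Prod.mk i) (Prod.mk j))) := by
  simp only [trace, diag_apply, mul_apply, kroneckerMap_apply, of_apply, submatrix_apply,
    Fintype.sum_prod_type, Finset.mul_sum, mul_assoc]
  exact Finset.sum_congr rfl fun i _ => Finset.sum_comm

lemma kronecker_mulVec_apply (M : Matrix m m ℝ) (N : Matrix ν ν ℝ) (x : m × ν → ℝ) (i : m)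
    (a : ν) : ((M ⊗ₖ N) *ᵥ x) (i, a) = (M *ᵥ fun j => (N *ᵥ fun b => x (j, b)) a) i := by
  simp only [mulVec, dotProduct, kroneckerMap_apply, Fintype.sum_prod_type, Finset.mul_sum,
    mul_assoc]

lemma sum_frobNormSq_submatrix (B : Matrix (m × ν) (m × ν) ℝ) :
    ∑ i, ∑ j, frobNormSq (B.submatrix (Prod.mk i) (Prod.mk j)) = frobNormSq B := by
  simp only [frobNormSq, submatrix_apply, Fintype.sum_prod_type]
  exact Finset.sum_congr rfl fun i _ => Finset.sum_comm

section Symmetries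

variable [DecidableEq m] [DecidableEq ν]

lemma signedConj_kronecker {ε : ν → ℝ} (hε : ∀ a, ε a = 1 ∨ ε a = -1) (e : Equiv.Perm ν)
    (M : Matrix m m ℝ) (N : Matrix ν ν ℝ) :
    signedConj (fun p : m × ν => hε p.2) ((Equiv.refl m).prodCongr e) (M ⊗ₖ N) =
      M ⊗ₖ signedConj hε e N := by
  ext ⟨i, a⟩ ⟨j, b⟩
  simp only [signedConj_apply, kroneckerMap_apply, Equiv.prodCongr_apply, Prod.map_apply,
    Equiv.refl_apply]
  ring

lemma PermutesUpToSign.tensorFamily {ε : ν → ℝ} {hε : ∀ a, ε a = 1 ∨ ε a = -1}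
    {e : Equiv.Perm ν} {H : κ → Matrix ν ν ℝ} (hH : PermutesUpToSign (signedConj hε e) H)
    (A : ι → Matrix m m ℝ) :
    PermutesUpToSign (signedConj (fun p : m × ν => hε p.2) ((Equiv.refl m).prodCongr e))
      (tensorFamily A H) := by
  obtain ⟨e', s, hs, h⟩ := hH
  refine ⟨(Equiv.refl ι).prodCongr e', fun p => s p.2, fun p => hs p.2, fun p => ?_⟩
  simp only [MatrixConcentration.tensorFamily, signedConj_kronecker, h, kronecker_smul]
  rfl

lemma exists_eq_kronecker_one {M : Matrix (m × ν) (m × ν) ℝ}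
    (hM : ∀ {ε : ν → ℝ} (hε : ∀ a, ε a = 1 ∨ ε a = -1) (e : Equiv.Perm ν),
      signedConj (fun p : m × ν => hε p.2) ((Equiv.refl m).prodCongr e) M = M) :
    ∃ S : Matrix m m ℝ, M = S ⊗ₖ (1 : Matrix ν ν ℝ) := by
  rcases isEmpty_or_nonempty ν with _ | ⟨⟨a₀⟩⟩
  · exact ⟨0, Subsingleton.elim _ _⟩
  refine ⟨M.submatrix (fun i => (i, a₀)) (fun i => (i, a₀)), ?_⟩
  ext ⟨i, a⟩ ⟨j, b⟩
  rcases eq_or_ne a b with rfl | hab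
  · have hswap := congrFun₂ (hM (ε := fun _ => 1) (fun _ => Or.inl rfl) (Equiv.swap a a₀))
      (i, a) (j, a)
    simpa [signedConj_apply] using hswap.symm
  · have hsign := congrFun₂ (hM (ε := fun c => if c = a then -1 else 1)
      (fun c => by by_cases hc : c = a <;> simp [hc]) (Equiv.refl ν)) (i, a) (j, b)
    simp only [signedConj_apply, if_pos, if_neg hab.symm, Equiv.prodCongr_apply, Prod.map_apply,
      Equiv.refl_apply] at hsign
    simp only [kroneckerMap_apply, one_apply_ne hab, mul_zero]
    linarith

end Symmetries

variable [Fintype ι] [Fintype κ]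

lemma sum_trace_tensorFamily_mul_sq_le {A : ι → Matrix m m ℝ} {H : κ → Matrix ν ν ℝ} {v s h t : ℝ}
    (hA : CovarianceBound A v s) (hH : CovarianceBound H h t) (B : Matrix (m × ν) (m × ν) ℝ) :
    ∑ p, trace (tensorFamily A H p * B) ^ 2 ≤ (v * h) ^ 2 * frobNormSq B := by
  set C : κ → Matrix m m ℝ := fun k =>
    of fun i j => trace (H k * B.submatrix (Prod.mk i) (Prod.mk j)) with hC
  calc ∑ p, trace (tensorFamily A H p * B) ^ 2 = ∑ k, ∑ i, trace (A i * C k) ^ 2 := by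
        simp only [tensorFamily, trace_kronecker_mul, Fintype.sum_prod_type, hC]
        exact Finset.sum_comm
    _ ≤ ∑ k, v ^ 2 * frobNormSq (C k) :=
        Finset.sum_le_sum fun k _ => hA.sum_trace_mul_sq_le (C k)
    _ = v ^ 2 * ∑ i, ∑ j, ∑ k, trace (H k * B.submatrix (Prod.mk i) (Prod.mk j)) ^ 2 := by
        rw [← Finset.mul_sum]
        simp only [frobNormSq, hC, of_apply]
        rw [Finset.sum_comm]
        exact congrArg _ (Finset.sum_congr rfl fun i _ => Finset.sum_comm)
    _ ≤ v ^ 2 * ∑ i, ∑ j, h ^ 2 * frobNormSq (B.submatrix (Prod.mk i) (Prod.mk j)) :=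
        mul_le_mul_of_nonneg_left (Finset.sum_le_sum fun i _ => Finset.sum_le_sum fun j _ =>
          hH.sum_trace_mul_sq_le _) (sq_nonneg v)
    _ = (v * h) ^ 2 * frobNormSq B := by
        simp only [← Finset.mul_sum, sum_frobNormSq_submatrix, mul_pow, mul_assoc]

lemma sum_tensorFamily_mulVec_dotProduct_self_le {A : ι → Matrix m m ℝ} {H : κ → Matrix ν ν ℝ}
    {v s h t : ℝ} (hA : CovarianceBound A v s) (hH : CovarianceBound H h t) (x : m × ν → ℝ) :
    ∑ p, (tensorFamily A H p *ᵥ x) ⬝ᵥ (tensorFamily A H p *ᵥ x) ≤ (s * t) ^ 2 * (x ⬝ᵥ x) := by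
  set y : κ → ν → m → ℝ := fun k a i => (H k *ᵥ fun b => x (i, b)) a with hy
  calc ∑ p, (tensorFamily A H p *ᵥ x) ⬝ᵥ (tensorFamily A H p *ᵥ x)
      = ∑ k, ∑ a, ∑ i, (A i *ᵥ y k a) ⬝ᵥ (A i *ᵥ y k a) := by
        rw [Fintype.sum_prod_type_right]
        refine Finset.sum_congr rfl fun k _ => ?_
        rw [Finset.sum_comm (s := Finset.univ (α := ν))]
        refine Finset.sum_congr rfl fun i _ => ?_
        rw [dotProduct, Fintype.sum_prod_type_right]
        simp only [tensorFamily, kronecker_mulVec_apply, dotProduct, hy]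
    _ ≤ ∑ k, ∑ a, s ^ 2 * (y k a ⬝ᵥ y k a) := Finset.sum_le_sum fun k _ =>
        Finset.sum_le_sum fun a _ => hA.sum_mulVec_dotProduct_self_le (y k a)
    _ = s ^ 2 * ∑ i, ∑ k, (H k *ᵥ fun b => x (i, b)) ⬝ᵥ (H k *ᵥ fun b => x (i, b)) := by
        simp only [← Finset.mul_sum, dotProduct, hy]
        rw [Finset.sum_comm (s := Finset.univ (α := m))]
        exact congrArg _ (Finset.sum_congr rfl fun k _ => Finset.sum_comm)
    _ ≤ s ^ 2 * ∑ i, t ^ 2 * ((fun b => x (i, b)) ⬝ᵥ fun b => x (i, b)) :=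
        mul_le_mul_of_nonneg_left (Finset.sum_le_sum fun i _ =>
          hH.sum_mulVec_dotProduct_self_le _) (sq_nonneg s)
    _ = (s * t) ^ 2 * (x ⬝ᵥ x) := by
        simp only [← Finset.mul_sum, dotProduct, Fintype.sum_prod_type, mul_pow, mul_assoc]

lemma CovarianceBound.tensorFamily {A : ι → Matrix m m ℝ} {H : κ → Matrix ν ν ℝ} {v s h t : ℝ}
    (hA : CovarianceBound A v s) (hH : CovarianceBound H h t) :
    CovarianceBound (tensorFamily A H) (v * h) (s * t) where
  isSymm p := by
    rw [IsSymm, MatrixConcentration.tensorFamily, ← kroneckerMap_transpose, (hA.isSymm p.1).eq,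
      (hH.isSymm p.2).eq]
  v_nonneg := mul_nonneg hA.v_nonneg hH.v_nonneg
  s_nonneg := mul_nonneg hA.s_nonneg hH.s_nonneg
  sum_trace_mul_sq_le := sum_trace_tensorFamily_mul_sq_le hA hH
  sum_mulVec_dotProduct_self_le := sum_tensorFamily_mulVec_dotProduct_self_le hA hH

lemma cos_sq_mul_add_sin_sq_mul_le {a b c : ℝ} (ha : a ≤ c) (hb : b ≤ c) (θ : ℝ) :
    Real.cos θ ^ 2 * a + Real.sin θ ^ 2 * b ≤ c := by
  have hcos := mul_le_mul_of_nonneg_left ha (sq_nonneg (Real.cos θ))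
  have hsin := mul_le_mul_of_nonneg_left hb (sq_nonneg (Real.sin θ))
  linear_combination hcos + hsin + c * Real.sin_sq_add_cos_sq θ

lemma CovarianceBound.rotatedFamily {P : ι → Matrix m m ℝ} {Q : κ → Matrix m m ℝ} {v s : ℝ}
    (hP : CovarianceBound P v s) (hQ : CovarianceBound Q v s) (θ : ℝ) :
    CovarianceBound (rotatedFamily θ P Q) v s where
  isSymm := Sum.rec (fun i => (hP.isSymm i).smul _) fun k => (hQ.isSymm k).smul _
  v_nonneg := hP.v_nonneg
  s_nonneg := hP.s_nonneg
  sum_trace_mul_sq_le B := by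
    simp only [Fintype.sum_sum_type, MatrixConcentration.rotatedFamily, Sum.elim_inl, Sum.elim_inr,
      Matrix.smul_mul, trace_smul, smul_eq_mul, mul_pow, ← Finset.mul_sum]
    exact cos_sq_mul_add_sin_sq_mul_le (hP.sum_trace_mul_sq_le B) (hQ.sum_trace_mul_sq_le B) θ
  sum_mulVec_dotProduct_self_le x := by
    simp only [Fintype.sum_sum_type, MatrixConcentration.rotatedFamily, Sum.elim_inl, Sum.elim_inr,
      smul_mulVec, dotProduct_smul, smul_dotProduct, smul_eq_mul, ← mul_assoc, ← sq,
      ← Finset.mul_sum]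
    exact cos_sq_mul_add_sin_sq_mul_le (hP.sum_mulVec_dotProduct_self_le x)
      (hQ.sum_mulVec_dotProduct_self_le x) θ

lemma sum_mulVec_dotProduct_self {F : κ → Matrix m m ℝ} (hF : ∀ k, (F k).IsSymm) (x : m → ℝ) :
    ∑ k, (F k *ᵥ x) ⬝ᵥ (F k *ᵥ x) = x ⬝ᵥ ((∑ k, F k * F k) *ᵥ x) := by
  rw [sum_mulVec, dotProduct_sum]
  refine Finset.sum_congr rfl fun k _ => ?_
  rw [← mulVec_mulVec, dotProduct_mulVec, ← mulVec_transpose, (hF k).eq, dotProduct_comm]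

end TensorFamilies

section IsotropicFamilies

open Kronecker

variable {ι κ κ' m ν : Type*} [Fintype κ] [Fintype κ'] [Fintype ν] [DecidableEq ν]

/-- Symmetric matrices whose squares sum to the identity and whose Gaussian series has a law
invariant under signed permutations; `h` bounds the parameter `v` of that series. -/
structure IsotropicFamily (H : κ → Matrix ν ν ℝ) (h : ℝ) : Prop where
  isSymm : ∀ j, (H j).IsSymm
  h_nonneg : 0 ≤ h
  sum_trace_mul_sq_le : ∀ B, ∑ j, trace (H j * B) ^ 2 ≤ h ^ 2 * frobNormSq B
  sum_mul_self : ∑ j, H j * H j = 1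
  permutesUpToSign : ∀ {ε : ν → ℝ} (hε : ∀ a, ε a = 1 ∨ ε a = -1) (e : Equiv.Perm ν),
    PermutesUpToSign (signedConj hε e) H

lemma IsotropicFamily.covarianceBound {H : κ → Matrix ν ν ℝ} {h : ℝ} (hH : IsotropicFamily H h) :
    CovarianceBound H h 1 where
  isSymm := hH.isSymm
  v_nonneg := hH.h_nonneg
  s_nonneg := zero_le_one
  sum_trace_mul_sq_le := hH.sum_trace_mul_sq_le
  sum_mulVec_dotProduct_self_le x := by
    rw [sum_mulVec_dotProduct_self hH.isSymm, hH.sum_mul_self, one_mulVec, one_pow, one_mul]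

lemma IsotropicFamily.mono {H : κ → Matrix ν ν ℝ} {h h' : ℝ} (hH : IsotropicFamily H h)
    (hh : h ≤ h') : IsotropicFamily H h' where
  isSymm := hH.isSymm
  h_nonneg := hH.h_nonneg.trans hh
  sum_trace_mul_sq_le B := (hH.sum_trace_mul_sq_le B).trans (mul_le_mul_of_nonneg_right
    (pow_le_pow_left₀ hH.h_nonneg hh 2) (frobNormSq_nonneg B))
  sum_mul_self := hH.sum_mul_self
  permutesUpToSign := hH.permutesUpToSign

/-- The matrix units on the diagonal: a Kronecker product with them gives independent diagonal
blocks. -/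
def diagonalUnits (ν : Type*) [DecidableEq ν] (a : ν) : Matrix ν ν ℝ := single a a 1

/-- The symmetrized matrix units, normalized so that their squares sum to the identity: their
Gaussian series is a Wigner matrix. -/
noncomputable def wignerUnits (ν : Type*) [Fintype ν] [DecidableEq ν] (p : ν × ν) : Matrix ν ν ℝ :=
  (1 / √(2 * (Fintype.card ν + 1))) • (single p.1 p.2 1 + single p.2 p.1 1)

lemma isotropicFamily_diagonalUnits : IsotropicFamily (diagonalUnits ν) 1 where
  isSymm a := transpose_single a a 1
  h_nonneg := zero_le_one
  sum_trace_mul_sq_le B := by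
    simp only [diagonalUnits, trace_single_mul, one_smul, one_pow, one_mul]
    exact Finset.sum_le_sum fun a _ => Finset.single_le_sum (f := fun b => B a b ^ 2)
      (fun _ _ => sq_nonneg _) (Finset.mem_univ a)
  sum_mul_self := by
    simp only [diagonalUnits, single_mul_single_same, mul_one, sum_single_one]
  permutesUpToSign {ε} hε e := by
    refine ⟨e.symm, fun _ => 1, fun _ => Or.inl rfl, fun a => ?_⟩
    have hsq : ε (e.symm a) * ε (e.symm a) = 1 := by
      rcases hε (e.symm a) with h | h <;> simp [h]
    rw [diagonalUnits, signedConj_single, hsq]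
    rfl

lemma sum_wignerUnits_mul_self : ∑ p, wignerUnits ν p * wignerUnits ν p = 1 := by
  have hsq (a b : ν) : (single a b 1 * single a b 1 : Matrix ν ν ℝ) =
      if b = a then single a a 1 else 0 := by
    split_ifs with hab
    · rw [hab, single_mul_single_same, mul_one]
    · exact single_mul_single_of_ne _ _ _ _ hab _
  have hunits : ∑ p : ν × ν, (single p.1 p.2 1 + single p.2 p.1 1 : Matrix ν ν ℝ) *
      (single p.1 p.2 1 + single p.2 p.1 1) = (2 * (Fintype.card ν + 1) : ℝ) • 1 := by
    simp only [Matrix.add_mul, Matrix.mul_add, hsq, single_mul_single_same, mul_one,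
      Finset.sum_add_distrib, Fintype.sum_prod_type, Finset.sum_ite_eq, Finset.sum_ite_eq',
      Finset.mem_univ, if_true, Finset.sum_const, ← Finset.smul_sum, sum_single_one,
      Finset.card_univ, ← Nat.cast_smul_eq_nsmul ℝ]
    module
  simp only [wignerUnits, smul_mul_smul_comm, ← Finset.smul_sum, hunits, smul_smul]
  rw [div_mul_div_comm, Real.mul_self_sqrt (by positivity), one_mul,
    one_div_mul_cancel (by positivity), one_smul]

lemma sum_trace_wignerUnits_mul_sq_le (B : Matrix ν ν ℝ) :
    ∑ p, trace (wignerUnits ν p * B) ^ 2 ≤ √(2 / (Fintype.card ν + 1)) ^ 2 * frobNormSq B := by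
  have htrace (p : ν × ν) : trace (wignerUnits ν p * B) ^ 2 =
      1 / (2 * (Fintype.card ν + 1)) * (B p.2 p.1 + B p.1 p.2) ^ 2 := by
    rw [wignerUnits, Matrix.smul_mul, Matrix.add_mul, trace_smul, trace_add, trace_single_mul,
      trace_single_mul, one_smul, one_smul, smul_eq_mul, mul_pow, div_pow,
      Real.sq_sqrt (by positivity), one_pow]
  have hsum : ∑ p : ν × ν, (B p.2 p.1 + B p.1 p.2) ^ 2 ≤ 4 * frobNormSq B := by
    calc ∑ p : ν × ν, (B p.2 p.1 + B p.1 p.2) ^ 2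
        ≤ ∑ p : ν × ν, (2 * B p.2 p.1 ^ 2 + 2 * B p.1 p.2 ^ 2) :=
          Finset.sum_le_sum fun p _ => by linarith [add_sq_le (a := B p.2 p.1) (b := B p.1 p.2)]
      _ = 2 * frobNormSq Bᵀ + 2 * frobNormSq B := by
          simp only [Finset.sum_add_distrib, ← Finset.mul_sum, Fintype.sum_prod_type, frobNormSq,
            transpose_apply]
      _ = 4 * frobNormSq B := by
          rw [frobNormSq_transpose]
          ring
  simp only [htrace, ← Finset.mul_sum]
  rw [Real.sq_sqrt (by positivity)]
  calc _ ≤ 1 / (2 * ((Fintype.card ν : ℝ) + 1)) * (4 * frobNormSq B) :=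
        mul_le_mul_of_nonneg_left hsum (by positivity)
    _ = 2 / (Fintype.card ν + 1) * frobNormSq B := by
        field_simp
        norm_num

lemma isotropicFamily_wignerUnits :
    IsotropicFamily (wignerUnits ν) (√(2 / (Fintype.card ν + 1))) where
  isSymm p := by
    simp only [IsSymm, wignerUnits, transpose_smul, transpose_add, transpose_single, add_comm]
  h_nonneg := Real.sqrt_nonneg _
  sum_trace_mul_sq_le := sum_trace_wignerUnits_mul_sq_le
  sum_mul_self := sum_wignerUnits_mul_self
  permutesUpToSign {ε} hε e := by
    refine ⟨e.symm.prodCongr e.symm, fun p => ε (e.symm p.1) * ε (e.symm p.2), fun p => ?_,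
      fun p => ?_⟩
    · rcases hε (e.symm p.1) with h | h <;> rcases hε (e.symm p.2) with h' | h' <;> simp [h, h']
    · simp only [wignerUnits, map_smul, map_add, signedConj_single, mul_comm (ε (e.symm p.2)),
        ← smul_add]
      exact smul_comm _ _ _

lemma covMap_tensorFamily_kronecker_one {H : κ → Matrix ν ν ℝ} (hH : ∑ j, H j * H j = 1)
    [Fintype ι] [Fintype m] (A : ι → Matrix m m ℝ) (S : Matrix m m ℝ) :
    covMap (tensorFamily A H) (S ⊗ₖ (1 : Matrix ν ν ℝ)) = covMap A S ⊗ₖ (1 : Matrix ν ν ℝ) := by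
  calc covMap (tensorFamily A H) (S ⊗ₖ (1 : Matrix ν ν ℝ))
      = ∑ i, ∑ j, (A i * S * A i) ⊗ₖ (H j * H j) := by
        simp only [covMap, tensorFamily, ← mul_kronecker_mul, Matrix.mul_one,
          Fintype.sum_prod_type]
    _ = covMap A S ⊗ₖ ∑ j, H j * H j := by
        ext ⟨i, a⟩ ⟨j, b⟩
        simp only [covMap, Matrix.sum_apply, kroneckerMap_apply, Finset.sum_mul_sum]
    _ = covMap A S ⊗ₖ (1 : Matrix ν ν ℝ) := by rw [hH]

lemma exists_gaussianMoment_rotatedFamily_eq_kronecker_one {H : κ → Matrix ν ν ℝ}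
    {H' : κ' → Matrix ν ν ℝ} {h h' : ℝ} (hH : IsotropicFamily H h) (hH' : IsotropicFamily H' h')
    [Fintype ι] [Fintype m] [DecidableEq m] (A : ι → Matrix m m ℝ) (θ : ℝ) (k : ℕ) :
    ∃ S : Matrix m m ℝ, gaussianMoment (rotatedFamily θ (tensorFamily A H) (tensorFamily A H')) k =
      S ⊗ₖ (1 : Matrix ν ν ℝ) :=
  exists_eq_kronecker_one fun hε e =>
    (((hH.permutesUpToSign hε e).tensorFamily A).rotatedFamily
      ((hH'.permutesUpToSign hε e).tensorFamily A) θ).map_gaussianMoment k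

lemma covMap_tensorFamily_gaussianMoment_rotatedFamily {H : κ → Matrix ν ν ℝ}
    {H' : κ' → Matrix ν ν ℝ} {h h' : ℝ} (hH : IsotropicFamily H h) (hH' : IsotropicFamily H' h')
    [Fintype ι] [Fintype m] [DecidableEq m] (A : ι → Matrix m m ℝ) (θ : ℝ) (k : ℕ) :
    covMap (tensorFamily A H)
        (gaussianMoment (rotatedFamily θ (tensorFamily A H) (tensorFamily A H')) k) =
      covMap (tensorFamily A H')
        (gaussianMoment (rotatedFamily θ (tensorFamily A H) (tensorFamily A H')) k) := by
  obtain ⟨S, hS⟩ := exists_gaussianMoment_rotatedFamily_eq_kronecker_one hH hH' A θ k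
  rw [hS, covMap_tensorFamily_kronecker_one hH.sum_mul_self,
    covMap_tensorFamily_kronecker_one hH'.sum_mul_self]

end IsotropicFamilies

section Comparison

variable {ι κ κ' m ν : Type*} [Fintype ι] [Fintype κ] [Fintype κ'] [Fintype m] [DecidableEq m]
  [Fintype ν] [DecidableEq ν]

lemma trace_pow_mul_pow_le {X : Matrix m m ℝ} (hX : X.IsSymm) {k l : ℕ} (hk : Even k) (hl : Even l)
    (t : ℝ) : trace (X ^ k) * t ^ l ≤ trace (X ^ (k + l)) + Fintype.card m * t ^ (k + l) := by
  obtain ⟨w, hw⟩ := exists_trace_pow_eq_sum hX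
  have hscalar (x : ℝ) : x ^ k * t ^ l ≤ x ^ (k + l) + t ^ (k + l) := by
    simpa [Fin.prod_univ_two, Fin.sum_univ_two, (hk.add hl).pow_abs] using
      (le_abs_self _).trans (abs_prod_pow_le_sum_abs_pow ![x, t] ![k, l])
  rw [hw, hw, Finset.sum_mul]
  exact (Finset.sum_le_sum fun a _ => hscalar (w a)).trans_eq (by simp [Finset.sum_add_distrib])

lemma trace_gaussianMoment_mul_pow_le {F : κ → Matrix m m ℝ} (hF : ∀ k, (F k).IsSymm) {k l : ℕ}
    (hk : Even k) (hl : Even l) (t : ℝ) :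
    trace (gaussianMoment F k) * t ^ l ≤
      trace (gaussianMoment F (k + l)) + Fintype.card m * t ^ (k + l) := by
  have hint := integrable_trace_gaussianSeries_pow F
  calc trace (gaussianMoment F k) * t ^ l
      = ∫ g, trace (gaussianSeries F g ^ k) * t ^ l ∂(gaussianProduct κ) := by
        rw [trace_gaussianMoment, integral_mul_const]
    _ ≤ ∫ g, (trace (gaussianSeries F g ^ (k + l)) + Fintype.card m * t ^ (k + l))
          ∂(gaussianProduct κ) :=
        integral_mono ((hint k).mul_const _) ((hint (k + l)).add (integrable_const _)) fun g =>
          trace_pow_mul_pow_le (gaussianSeries_isSymm hF g) hk hl t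
    _ = trace (gaussianMoment F (k + l)) + Fintype.card m * t ^ (k + l) := by
        rw [integral_add (hint (k + l)) (integrable_const _), ← trace_gaussianMoment]
        simp

lemma abs_trace_covMoment_sub_le {R : κ → Matrix m m ℝ} {F : κ' → Matrix m m ℝ} {v s v' s' : ℝ}
    (hR : CovarianceBound R v s) (hF : CovarianceBound F v' s') {k l q : ℕ} (hq : Even q)
    (hkl : k + l = q + 2) :
    |trace (covMoment R F k l) - trace (covMap R (gaussianMoment F k) * gaussianMoment F l)| ≤
      2 * Real.pi * (k * l) * (v * s * (v' * s')) * trace (gaussianMoment F q) := by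
  refine (norm_map_covMoment_sub_le R hF.isSymm (traceLinearMap m ℝ ℝ) (q := q) (a := 0)
    (b := 2 * (v * s * (v' * s'))) fun {U V} hU hV i₁ i₂ j₁ j₂ hi hj => ?_).trans_eq (by ring)
  have hsum : ∑ i, ![i₁, i₂, j₁, j₂] i = q := by
    simp only [Fin.sum_univ_four]
    simp
    omega
  have hcrossing := abs_trace_crossing_pow_le hR hF (X := ![U, U, V, V])
    (by simp [Fin.forall_fin_succ, hU, hV]) ![i₁, i₂, j₁, j₂] (hsum ▸ hq)
  rw [hsum, Fin.sum_univ_four] at hcrossing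
  refine hcrossing.trans_eq ?_
  simp
  ring

lemma abs_trace_covMoment_sub_covMoment_le {A : ι → Matrix m m ℝ} {v s : ℝ}
    (hA : CovarianceBound A v s) {H : κ → Matrix ν ν ℝ} {H' : κ' → Matrix ν ν ℝ}
    (hH : IsotropicFamily H 1) (hH' : IsotropicFamily H' 1) (θ : ℝ) {k l q : ℕ} (hq : Even q)
    (hkl : k + l = q + 2) :
    |trace (covMoment (tensorFamily A H')
          (rotatedFamily θ (tensorFamily A H) (tensorFamily A H')) k l) -
        trace (covMoment (tensorFamily A H)
          (rotatedFamily θ (tensorFamily A H) (tensorFamily A H')) k l)| ≤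
      16 * (k * l) * (v * s) ^ 2 * trace (gaussianMoment
        (rotatedFamily θ (tensorFamily A H) (tensorFamily A H')) q) := by
  have hP : CovarianceBound (tensorFamily A H) v s := by
    simpa only [mul_one] using hA.tensorFamily hH.covarianceBound
  have hQ : CovarianceBound (tensorFamily A H') v s := by
    simpa only [mul_one] using hA.tensorFamily hH'.covarianceBound
  set F := rotatedFamily θ (tensorFamily A H) (tensorFamily A H') with hF_def
  have hF : CovarianceBound F v s := hP.rotatedFamily hQ θ
  have hdec' := abs_trace_covMoment_sub_le hQ hF hq hkl
  have hdec := abs_trace_covMoment_sub_le hP hF hq hkl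
  rw [hF_def, covMap_tensorFamily_gaussianMoment_rotatedFamily hH hH', abs_sub_comm,
    ← hF_def] at hdec
  refine (abs_sub_le _ _ _).trans ((add_le_add hdec' hdec).trans ?_)
  have htrace := trace_gaussianMoment_nonneg hF.isSymm hq
  have hpi := mul_le_mul_of_nonneg_right Real.pi_le_four
    (show 0 ≤ 4 * (k * l) * (v * s) ^ 2 * trace (gaussianMoment F q) by positivity)
  linarith

lemma abs_sum_trace_covMoment_sub_le {A : ι → Matrix m m ℝ} {v s : ℝ}
    (hA : CovarianceBound A v s) {H : κ → Matrix ν ν ℝ} {H' : κ' → Matrix ν ν ℝ}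
    (hH : IsotropicFamily H 1) (hH' : IsotropicFamily H' 1) (θ : ℝ) {q : ℕ} (hq : Even q)
    {F : ι × κ ⊕ ι × κ' → Matrix (m × ν) (m × ν) ℝ}
    (hF : F = rotatedFamily θ (tensorFamily A H) (tensorFamily A H'))
    (htrace : 0 ≤ trace (gaussianMoment F q)) :
    |∑ i ∈ Finset.range (q + 3),
        (trace (covMoment (tensorFamily A H') F i (q + 3 - 1 - i)) -
          trace (covMoment (tensorFamily A H) F i (q + 3 - 1 - i)))| ≤
      4 * (q + 4) ^ 3 * (v * s) ^ 2 * trace (gaussianMoment F q) := by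
  have hterm : ∀ i ∈ Finset.range (q + 3),
      |trace (covMoment (tensorFamily A H') F i (q + 3 - 1 - i)) -
        trace (covMoment (tensorFamily A H) F i (q + 3 - 1 - i))| ≤
      4 * (q + 4) ^ 2 * (v * s) ^ 2 * trace (gaussianMoment F q) := by
    intro i hi
    have hi := Finset.mem_range.1 hi
    subst hF
    refine (abs_trace_covMoment_sub_covMoment_le hA hH hH' θ hq
      (show i + (q + 3 - 1 - i) = q + 2 by omega)).trans ?_
    have hmul : (i : ℝ) * (q + 3 - 1 - i : ℕ) ≤ (q + 4) ^ 2 / 4 := by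
      have hcast : (i : ℝ) + (q + 3 - 1 - i : ℕ) = q + 2 := by norm_cast; omega
      nlinarith [sq_nonneg ((i : ℝ) - (q + 3 - 1 - i : ℕ))]
    rw [show 4 * (q + 4 : ℝ) ^ 2 = 16 * ((q + 4) ^ 2 / 4) by ring]
    gcongr
  refine (Finset.abs_sum_le_sum_abs _ _).trans
    ((Finset.sum_le_card_nsmul _ _ _ hterm).trans ?_)
  rw [Finset.card_range, nsmul_eq_mul]
  calc ((q + 3 : ℕ) : ℝ) * (4 * (q + 4) ^ 2 * (v * s) ^ 2 * trace (gaussianMoment F q))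
      ≤ (q + 4) * (4 * (q + 4) ^ 2 * (v * s) ^ 2 * trace (gaussianMoment F q)) := by
        gcongr
        push_cast
        linarith
    _ = _ := by ring

lemma neg_mul_le_mul_sum_trace_covMoment_sub {A : ι → Matrix m m ℝ} {v s : ℝ}
    (hA : CovarianceBound A v s) {H : κ → Matrix ν ν ℝ} {H' : κ' → Matrix ν ν ℝ}
    (hH : IsotropicFamily H 1) (hH' : IsotropicFamily H' 1) {q : ℕ} (hq : Even q) {t : ℝ}
    (ht : ((q : ℝ) + 4) ^ 3 * (v * s) ^ 2 ≤ t ^ 4) (θ : ℝ)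
    {F : ι × κ ⊕ ι × κ' → Matrix (m × ν) (m × ν) ℝ}
    (hF : F = rotatedFamily θ (tensorFamily A H) (tensorFamily A H')) :
    -(4 * (q + 4) * (trace (gaussianMoment F (q + 4)) + Fintype.card (m × ν) * t ^ (q + 4))) ≤
      ((q + 3 : ℕ) + 1) * (Real.sin θ * Real.cos θ) * ∑ i ∈ Finset.range (q + 3),
        (trace (covMoment (tensorFamily A H') F i (q + 3 - 1 - i)) -
          trace (covMoment (tensorFamily A H) F i (q + 3 - 1 - i))) := by
  have hF_symm : ∀ k, (F k).IsSymm :=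
    hF ▸ ((hA.tensorFamily hH.covarianceBound).rotatedFamily
      (hA.tensorFamily hH'.covarianceBound) θ).isSymm
  have htrace := trace_gaussianMoment_nonneg hF_symm hq
  have hsum := abs_sum_trace_covMoment_sub_le hA hH hH' θ hq hF htrace
  have hsin_cos : |Real.sin θ * Real.cos θ| ≤ 1 := by
    rw [abs_mul]
    exact mul_le_one₀ (Real.abs_sin_le_one θ) (abs_nonneg _) (Real.abs_cos_le_one θ)
  refine (abs_le.1 ?_).1
  rw [show ((q + 3 : ℕ) + 1 : ℝ) = q + 4 by push_cast; ring, abs_mul, abs_mul,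
    abs_of_nonneg (by positivity : (0 : ℝ) ≤ q + 4)]
  calc _ ≤ (q + 4 : ℝ) * 1 * (4 * (q + 4) ^ 3 * (v * s) ^ 2 * trace (gaussianMoment F q)) := by
        gcongr
    _ = 4 * (q + 4) * (trace (gaussianMoment F q) * (((q : ℝ) + 4) ^ 3 * (v * s) ^ 2)) := by ring
    _ ≤ 4 * (q + 4) * (trace (gaussianMoment F q) * t ^ 4) := by gcongr
    _ ≤ _ := by
        gcongr
        exact trace_gaussianMoment_mul_pow_le hF_symm hq (by decide) t

lemma le_exp_mul_of_neg_mul_le_deriv {f f' : ℝ → ℝ} {L : ℝ} (hf : ∀ x, HasDerivAt f (f' x) x)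
    (hf' : ∀ x, -(L * f x) ≤ f' x) {a b : ℝ} (hab : a ≤ b) :
    f a ≤ Real.exp (L * (b - a)) * f b := by
  have hderiv (x : ℝ) := (hf x).mul ((hasDerivAt_id' x).const_mul L).exp
  have hmono : Monotone fun x => f x * Real.exp (L * x) := by
    refine monotone_of_deriv_nonneg (fun x => (hderiv x).differentiableAt) fun x => ?_
    have := mul_le_mul_of_nonneg_right (hf' x) (Real.exp_pos (L * x)).le
    exact (by linarith : (0 : ℝ) ≤ _).trans_eq (hderiv x).deriv.symm
  have := mul_le_mul_of_nonneg_right (hmono hab) (Real.exp_pos (-(L * a))).le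
  simpa [mul_assoc, ← Real.exp_add, mul_comm, ← sub_eq_add_neg, ← mul_sub] using this

theorem trace_gaussianMoment_tensorFamily_le {A : ι → Matrix m m ℝ} {v s : ℝ}
    (hA : CovarianceBound A v s) {H : κ → Matrix ν ν ℝ} {H' : κ' → Matrix ν ν ℝ}
    (hH : IsotropicFamily H 1) (hH' : IsotropicFamily H' 1) {q : ℕ} (hq : Even q) {t : ℝ}
    (ht : ((q : ℝ) + 4) ^ 3 * (v * s) ^ 2 ≤ t ^ 4) :
    trace (gaussianMoment (tensorFamily A H) (q + 4)) ≤ Real.exp (8 * (q + 4)) *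
      (trace (gaussianMoment (tensorFamily A H') (q + 4)) +
        Fintype.card (m × ν) * t ^ (q + 4)) := by
  have hq' : Even (q + 4) := hq.add (by decide)
  have hD : 0 ≤ Fintype.card (m × ν) * t ^ (q + 4) :=
    mul_nonneg (Nat.cast_nonneg _) (hq'.pow_nonneg t)
  have hgronwall := le_exp_mul_of_neg_mul_le_deriv
    (fun θ => (hasDerivAt_trace_gaussianMoment_rotatedFamily (tensorFamily A H)
      (tensorFamily A H') (q + 3) θ).add_const (Fintype.card (m × ν) * t ^ (q + 4)))
    (fun θ => neg_mul_le_mul_sum_trace_covMoment_sub hA hH hH' hq ht θ rfl)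
    Real.pi_div_two_pos.le
  simp only [rotatedFamily_zero, rotatedFamily_pi_div_two, gaussianMoment_sumElim_zero,
    gaussianMoment_zero_sumElim] at hgronwall
  refine (le_add_of_nonneg_right hD).trans (hgronwall.trans ?_)
  have htrace := trace_gaussianMoment_nonneg (hA.tensorFamily hH'.covarianceBound).isSymm hq'
  gcongr ?_ * _
  refine Real.exp_le_exp.2 ?_
  nlinarith [Real.pi_le_four, (q.cast_nonneg : (0 : ℝ) ≤ q)]

end Comparison

section Catalan

variable {ι κ m : Type*} [Fintype ι] [Fintype κ] [Fintype m] [DecidableEq m]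
  {R : ι → Matrix m m ℝ} {F : κ → Matrix m m ℝ} {v s : ℝ}

lemma trace_covMoment_le (hR : CovarianceBound R v s) (hF : ∀ k, (F k).IsSymm) {k l : ℕ}
    (hkl : Even (k + l)) :
    trace (covMoment R F k l) ≤ 2 * s ^ 2 * trace (gaussianMoment F (k + l)) := by
  have hint := integrable_covMap_pow_mul_pow R F k l
  rw [covMoment, ← traceLinearMap_apply m ℝ ℝ, map_integral_matrix _ hint, trace_gaussianMoment,
    ← integral_const_mul]
  exact integral_mono ((traceLinearMap m ℝ ℝ).toContinuousLinearMap.integrable_comp hint)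
    ((integrable_trace_gaussianSeries_pow F _).const_mul _) fun g => (le_abs_self _).trans
      (abs_trace_covMap_pow_mul_pow_le hR (gaussianSeries_isSymm hF g) hkl)

lemma trace_gaussianMoment_le_factorial (hF : CovarianceBound F v s) {k : ℕ} (hk : Even k) :
    trace (gaussianMoment F k) ≤ k.factorial * (Fintype.card m * s ^ k) := by
  obtain ⟨k, rfl⟩ := hk.two_dvd
  clear hk
  induction k with
  | zero => simp [gaussianMoment_zero]
  | succ k ih =>
    have hterm : ∀ i ∈ Finset.range (2 * k + 1), trace (covMoment F F i (2 * k + 1 - 1 - i)) ≤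
        2 * s ^ 2 * trace (gaussianMoment F (2 * k)) := by
      intro i hi
      have hadd : i + (2 * k + 1 - 1 - i) = 2 * k := by
        have := Finset.mem_range.1 hi
        omega
      have hle := trace_covMoment_le hF hF.isSymm (hadd ▸ even_two_mul k)
      rwa [hadd] at hle
    have := trace_gaussianMoment_nonneg hF.isSymm (even_two_mul k)
    calc trace (gaussianMoment F (2 * (k + 1)))
        = ∑ i ∈ Finset.range (2 * k + 1), trace (covMoment F F i (2 * k + 1 - 1 - i)) := by
          rw [mul_add, gaussianMoment_succ, trace_sum]
      _ ≤ (2 * k + 1 : ℕ) * (2 * s ^ 2 * trace (gaussianMoment F (2 * k))) := by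
          simpa using Finset.sum_le_card_nsmul _ _ _ hterm
      _ ≤ (2 * k + 1 : ℕ) *
            ((2 * k + 2 : ℕ) * s ^ 2 * ((2 * k).factorial * (Fintype.card m * s ^ (2 * k)))) := by
          gcongr
          exact_mod_cast (by omega : 2 ≤ 2 * k + 2)
      _ = (2 * (k + 1)).factorial * (Fintype.card m * s ^ (2 * (k + 1))) := by
          rw [mul_add, Nat.factorial_succ, Nat.factorial_succ]
          push_cast
          ring

lemma norm_crossing_pow_le [Nonempty m] (hR : CovarianceBound R v s) (hF : CovarianceBound F v s)
    {U V : Matrix m m ℝ} (hU : U.IsSymm) (hV : V.IsSymm) {i₁ i₂ j₁ j₂ n : ℕ}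
    (hn : i₁ + i₂ + (j₁ + j₂) = n) {t : ℝ} (ht : 0 < t) :
    ‖crossing R F (U ^ i₁) (U ^ i₂) (V ^ j₁) (V ^ j₂)‖ ≤
      (v * s) ^ 2 * (2 * t) + (v * s) ^ 2 / t * (trace (U ^ (2 * n)) + trace (V ^ (2 * n))) := by
  have hnorm_pow (X : Matrix m m ℝ) (i : ℕ) : ‖X ^ i‖ ≤ ‖X‖ ^ i := by
    rcases i.eq_zero_or_pos with rfl | hi
    · simp
    · exact norm_pow_le' X hi
  have htrace {X : Matrix m m ℝ} (hX : X.IsSymm) : ‖X‖ ^ n ≤ t + trace (X ^ (2 * n)) / t := by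
    have hsq : (‖X‖ ^ n) ^ 2 ≤ trace (X ^ (2 * n)) := by
      rw [← pow_mul, mul_comm]
      rcases eq_or_ne n 0 with rfl | hn
      · simpa using Nat.one_le_iff_ne_zero.2 (Fintype.card_ne_zero (α := m))
      · exact norm_pow_le_trace_pow hX (even_two_mul n) (by omega)
    refine le_trans ?_ (add_le_add_right (div_le_div_of_nonneg_right hsq ht.le) t)
    rw [← sub_nonneg, show t + (‖X‖ ^ n) ^ 2 / t - ‖X‖ ^ n =
      ((‖X‖ ^ n - t / 2) ^ 2 + 3 / 4 * t ^ 2) / t by field_simp; ring]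
    positivity
  have hprod : ‖U‖ ^ (i₁ + i₂) * ‖V‖ ^ (j₁ + j₂) ≤ ‖U‖ ^ n + ‖V‖ ^ n := by
    simpa [Fin.prod_univ_two, Fin.sum_univ_two, hn, abs_of_nonneg] using
      (le_abs_self _).trans (abs_prod_pow_le_sum_abs_pow ![‖U‖, ‖V‖] ![i₁ + i₂, j₁ + j₂])
  have := hR.v_nonneg
  have := hR.s_nonneg
  calc ‖crossing R F (U ^ i₁) (U ^ i₂) (V ^ j₁) (V ^ j₂)‖
      ≤ v * s * (v * s) * (‖U‖ ^ i₁ * ‖U‖ ^ i₂ * ‖V‖ ^ j₁ * ‖V‖ ^ j₂) := by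
        refine (norm_crossing_le hR hF _ _ _ _).trans ?_
        gcongr <;> apply hnorm_pow
    _ = (v * s) ^ 2 * (‖U‖ ^ (i₁ + i₂) * ‖V‖ ^ (j₁ + j₂)) := by ring
    _ ≤ (v * s) ^ 2 * (t + trace (U ^ (2 * n)) / t + (t + trace (V ^ (2 * n)) / t)) := by
        gcongr
        exact hprod.trans (add_le_add (htrace hU) (htrace hV))
    _ = _ := by ring

lemma norm_covMoment_sub_le [Nonempty m] (hF : CovarianceBound F v s) (hs : 0 < s) (k l : ℕ) :
    ‖covMoment F F k l - covMap F (gaussianMoment F k) * gaussianMoment F l‖ ≤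
      Real.pi * (k * l) * (1 + (2 * (k + l)).factorial) *
        (v ^ 2 * √(Fintype.card m)) * s ^ (k + l) := by
  rcases k with _ | k
  · simpa using norm_map_covMoment_sub_le F hF.isSymm LinearMap.id (k := 0) (l := l) (q := 0)
      (a := 0) (b := 0) (by omega)
  rcases l with _ | l
  · simpa using norm_map_covMoment_sub_le F hF.isSymm LinearMap.id (k := k + 1) (l := 0) (q := 0)
      (a := 0) (b := 0) (by omega)
  set t := √(Fintype.card m) * s ^ (k + l) with ht_def
  have ht : 0 < t := by positivity
  refine (norm_map_covMoment_sub_le F hF.isSymm LinearMap.id (q := 2 * (k + l))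
    fun hU hV i₁ i₂ j₁ j₂ hi hj => norm_crossing_pow_le hF hF hU hV
      (show i₁ + i₂ + (j₁ + j₂) = k + l by omega) ht).trans ?_
  have hmoment : trace (gaussianMoment F (2 * (k + l))) ≤
      (2 * (k + 1 + (l + 1))).factorial * t ^ 2 := by
    refine (trace_gaussianMoment_le_factorial hF (even_two_mul _)).trans ?_
    rw [ht_def, mul_pow, Real.sq_sqrt (Nat.cast_nonneg _), ← pow_mul, mul_comm (k + l)]
    gcongr <;> omega
  have := hF.v_nonneg
  calc _ ≤ Real.pi / 2 * ((k + 1 : ℕ) * (l + 1 : ℕ) * ((v * s) ^ 2 * (2 * t) +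
        2 * ((v * s) ^ 2 / t) * ((2 * (k + 1 + (l + 1))).factorial * t ^ 2))) := by gcongr
    _ = Real.pi * ((k + 1 : ℕ) * (l + 1 : ℕ)) * (1 + (2 * (k + 1 + (l + 1))).factorial) *
        ((v * s) ^ 2 * t) := by
        field_simp
    _ = _ := by
        rw [ht_def]
        ring

lemma sum_range_two_mul_add_one_of_odd {M : Type*} [AddCommMonoid M] {f : ℕ → M}
    (hf : ∀ i, Odd i → f i = 0) (k : ℕ) :
    ∑ i ∈ Finset.range (2 * k + 1), f i = ∑ a ∈ Finset.range (k + 1), f (2 * a) := by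
  induction k with
  | zero => simp
  | succ k ih =>
    rw [Finset.sum_range_succ _ (k + 1), ← ih, mul_add, Finset.sum_range_succ,
      Finset.sum_range_succ _ (2 * k + 1), hf (2 * k + 1) (odd_two_mul_add_one k), add_zero]

/-- The factor by which `v² √(dim)` must be dominated by `σ²` for the moments of order `2k + 2` to
satisfy the Catalan recursion. -/
noncomputable def catalanThreshold (k : ℕ) : ℝ :=
  (2 * k + 1) * (Real.pi * (k * k) * (1 + (2 * (2 * k)).factorial))

lemma norm_gaussianMoment_two_mul_succ_le [Nonempty m] (hF : CovarianceBound F v s) (hs : 0 < s)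
    {k : ℕ} (hk : catalanThreshold k * (v ^ 2 * √(Fintype.card m)) ≤ s ^ 2) :
    ‖gaussianMoment F (2 * (k + 1))‖ ≤ s ^ 2 * ∑ a ∈ Finset.range (k + 1),
      ‖gaussianMoment F (2 * a)‖ * ‖gaussianMoment F (2 * (k - a))‖ + s ^ 2 * s ^ (2 * k) := by
  set f : ℕ → Matrix m m ℝ := fun i =>
    covMap F (gaussianMoment F i) * gaussianMoment F (2 * k + 1 - 1 - i)
  have hodd : ∀ i, Odd i → f i = 0 := fun i hi => by
    simp [f, gaussianMoment_of_odd F hi, covMap]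
  have herror : ∀ i ∈ Finset.range (2 * k + 1), ‖covMoment F F i (2 * k + 1 - 1 - i) - f i‖ ≤
      Real.pi * (k * k) * (1 + (2 * (2 * k)).factorial) * (v ^ 2 * √(Fintype.card m)) *
        s ^ (2 * k) := by
    intro i hi
    have hi := Finset.mem_range.1 hi
    refine (norm_covMoment_sub_le hF hs i (2 * k + 1 - 1 - i)).trans ?_
    have hadd : i + (2 * k + 1 - 1 - i) = 2 * k := by omega
    have hmul : (i : ℝ) * (2 * k + 1 - 1 - i : ℕ) ≤ k * k := by
      have hcast : (i : ℝ) + (2 * k + 1 - 1 - i : ℕ) = 2 * k := by exact_mod_cast hadd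
      nlinarith [sq_nonneg ((i : ℝ) - (2 * k + 1 - 1 - i : ℕ))]
    rw [hadd]
    gcongr
  have hmain : ∀ a ∈ Finset.range (k + 1), ‖f (2 * a)‖ ≤
      s ^ 2 * (‖gaussianMoment F (2 * a)‖ * ‖gaussianMoment F (2 * (k - a))‖) := by
    intro a _
    rw [← mul_assoc, Nat.mul_sub]
    exact (norm_mul_le _ _).trans
      (mul_le_mul_of_nonneg_right (norm_covMap_le hF _) (norm_nonneg _))
  rw [mul_add, gaussianMoment_succ,
    ← add_sub_cancel (∑ i ∈ Finset.range (2 * k + 1), f i) (∑ i ∈ Finset.range (2 * k + 1), _),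
    ← Finset.sum_sub_distrib, sum_range_two_mul_add_one_of_odd hodd, Finset.mul_sum]
  refine (norm_add_le _ _).trans (add_le_add (norm_sum_le_of_le _ hmain)
    ((norm_sum_le_of_le _ herror).trans ?_))
  rw [Finset.sum_const, Finset.card_range, nsmul_eq_mul, ← mul_assoc, ← mul_assoc]
  refine mul_le_mul_of_nonneg_right (le_trans (le_of_eq ?_) hk) (by positivity)
  rw [catalanThreshold]
  push_cast
  ring

lemma catalan_pos (k : ℕ) : 0 < catalan k :=
  Nat.pos_of_mul_pos_left (succ_mul_catalan_eq_centralBinom k ▸ k.centralBinom_pos)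

lemma catalan_le_four_pow (k : ℕ) : catalan k ≤ 4 ^ k :=
  (Nat.le_mul_of_pos_left _ k.succ_pos).trans
    ((succ_mul_catalan_eq_centralBinom k).trans_le k.centralBinom_le_four_pow)

lemma norm_gaussianMoment_two_mul_le_catalan [Nonempty m] (hF : CovarianceBound F v s)
    (hs : 0 < s) {k : ℕ}
    (hk : ∀ j < k, catalanThreshold j * (v ^ 2 * √(Fintype.card m)) ≤ s ^ 2) :
    ‖gaussianMoment F (2 * k)‖ ≤ catalan k * (2 * s ^ 2) ^ k := by
  induction k using Nat.strong_induction_on with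
  | _ k ih =>
    rcases k with _ | k
    · simp [gaussianMoment_zero]
    have hterm : ∀ a ∈ Finset.range (k + 1),
        ‖gaussianMoment F (2 * a)‖ * ‖gaussianMoment F (2 * (k - a))‖ ≤
          (catalan a * catalan (k - a) : ℕ) * (2 * s ^ 2) ^ k := by
      intro a ha
      have ha := Finset.mem_range.1 ha
      calc _ ≤ catalan a * (2 * s ^ 2) ^ a * (catalan (k - a) * (2 * s ^ 2) ^ (k - a)) := by
            gcongr
            · exact ih a ha fun j hj => hk j (by omega)
            · exact ih (k - a) (by omega) fun j hj => hk j (by omega)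
        _ = (catalan a * catalan (k - a) : ℕ) * (2 * s ^ 2) ^ (a + (k - a)) := by
            push_cast
            ring
        _ = _ := by rw [Nat.add_sub_cancel' (by omega)]
    have hsum : ∑ a ∈ Finset.range (k + 1), catalan a * catalan (k - a) = catalan (k + 1) := by
      rw [catalan_succ, Finset.sum_range]
    have hone : s ^ (2 * k) ≤ catalan (k + 1) * (2 * s ^ 2) ^ k := by
      rw [pow_mul]
      exact (pow_le_pow_left₀ (by positivity) (by linarith [sq_nonneg s]) k).trans
        (le_mul_of_one_le_left (by positivity) (by exact_mod_cast catalan_pos (k + 1)))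
    refine (norm_gaussianMoment_two_mul_succ_le hF hs (hk k k.lt_succ_self)).trans ?_
    calc _ ≤ s ^ 2 * (catalan (k + 1) * (2 * s ^ 2) ^ k) +
          s ^ 2 * (catalan (k + 1) * (2 * s ^ 2) ^ k) := by
          gcongr
          rw [← hsum, Nat.cast_sum, Finset.sum_mul]
          exact Finset.sum_le_sum hterm
      _ = _ := by ring

theorem trace_gaussianMoment_le_eight_mul_sq_pow [Nonempty m] (hF : CovarianceBound F v s)
    (hs : 0 < s) {k : ℕ}
    (hk : ∀ j < k, catalanThreshold j * (v ^ 2 * √(Fintype.card m)) ≤ s ^ 2) :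
    trace (gaussianMoment F (2 * k)) ≤ Fintype.card m * (8 * s ^ 2) ^ k := by
  refine (trace_le_card_mul_norm _).trans (mul_le_mul_of_nonneg_left ?_ (Nat.cast_nonneg _))
  calc ‖gaussianMoment F (2 * k)‖ ≤ catalan k * (2 * s ^ 2) ^ k :=
        norm_gaussianMoment_two_mul_le_catalan hF hs hk
    _ ≤ (4 ^ k : ℕ) * (2 * s ^ 2) ^ k := by
        gcongr
        exact catalan_le_four_pow k
    _ = (8 * s ^ 2) ^ k := by
        rw [Nat.cast_pow, ← mul_pow]
        ring

end Catalan

section GaussianSeries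

open Filter Kronecker Topology

variable {ι m ν : Type*} [Fintype ι]

lemma gaussianSeries_tensorFamily_diagonalUnits [Fintype ν] [DecidableEq ν] (A : ι → Matrix m m ℝ)
    (g : ι × ν → ℝ) :
    gaussianSeries (tensorFamily A (diagonalUnits ν)) g =
      blockDiagonal fun a => gaussianSeries A fun i => g (i, a) := by
  ext ⟨i, a⟩ ⟨j, b⟩
  simp only [gaussianSeries, tensorFamily, diagonalUnits, Fintype.sum_prod_type, Matrix.sum_apply,
    Matrix.smul_apply, kroneckerMap_apply, single_apply, blockDiagonal_apply, smul_eq_mul, ite_and,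
    mul_ite, mul_one, mul_zero, Finset.sum_ite_eq', Finset.mem_univ, if_true]
  split_ifs <;> simp

variable [Fintype m] [DecidableEq m] {A : ι → Matrix m m ℝ} {v s : ℝ}

lemma pow_integral_norm_gaussianSeries_le (hA : ∀ i, (A i).IsSymm) {k : ℕ} (hk : Even k)
    (hk0 : k ≠ 0) :
    (∫ g, ‖gaussianSeries A g‖ ∂(gaussianProduct ι)) ^ k ≤ trace (gaussianMoment A k) := by
  have hnorm : Integrable (fun g => ‖gaussianSeries A g‖) (gaussianProduct ι) := by
    simpa only [pow_one] using (integrable_gaussianSeries_pow A 1).norm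
  have hle (g : ι → ℝ) : ‖gaussianSeries A g‖ ^ k ≤ trace (gaussianSeries A g ^ k) :=
    norm_pow_le_trace_pow (gaussianSeries_isSymm hA g) hk hk0
  have hpow : Integrable (fun g => ‖gaussianSeries A g‖ ^ k) (gaussianProduct ι) :=
    (integrable_trace_gaussianSeries_pow A k).mono' (hnorm.aestronglyMeasurable.pow k)
      (Eventually.of_forall fun g => by rw [norm_pow, norm_norm]; exact hle g)
  calc _ ≤ ∫ g, ‖gaussianSeries A g‖ ^ k ∂(gaussianProduct ι) :=
        (convexOn_pow k).map_integral_le (continuous_pow k).continuousOn isClosed_Ici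
          (Eventually.of_forall fun g => norm_nonneg _) hnorm hpow
    _ ≤ _ := by
        rw [trace_gaussianMoment]
        exact integral_mono hpow (integrable_trace_gaussianSeries_pow A k) hle

lemma trace_gaussianMoment_tensorFamily_diagonalUnits [Fintype ν] [DecidableEq ν]
    (A : ι → Matrix m m ℝ) (k : ℕ) :
    trace (gaussianMoment (tensorFamily A (diagonalUnits ν)) k) =
      Fintype.card ν * trace (gaussianMoment A k) := by
  have hmp (a : ν) := measurePreserving_comp_injective (Prod.mk_left_injective (α := ι) a)
  have hint := integrable_trace_gaussianSeries_pow A k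
  have hblock_int (a : ν) : Integrable (fun g : ι × ν → ℝ =>
      trace (gaussianSeries A (fun i => g (i, a)) ^ k)) (gaussianProduct (ι × ν)) :=
    (hmp a).integrable_comp_of_integrable hint
  have hblock (a : ν) : ∫ g : ι × ν → ℝ, trace (gaussianSeries A (fun i => g (i, a)) ^ k)
      ∂(gaussianProduct (ι × ν)) = trace (gaussianMoment A k) := by
    rw [trace_gaussianMoment]
    conv_rhs => rw [← (hmp a).map_eq]
    rw [integral_map (hmp a).measurable.aemeasurable
      ((hmp a).map_eq.symm ▸ hint.aestronglyMeasurable)]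
  simp only [trace_gaussianMoment (tensorFamily A _), gaussianSeries_tensorFamily_diagonalUnits,
    ← blockDiagonal_pow, trace_blockDiagonal, Pi.pow_apply]
  rw [integral_finsetSum _ fun a _ => hblock_int a,
    Finset.sum_congr rfl fun a _ => hblock a, Finset.sum_const, Finset.card_univ, nsmul_eq_mul]

lemma tendsto_two_div_add_one_mul_sqrt :
    Tendsto (fun N : ℕ => 2 / ((N : ℝ) + 1) * √N) atTop (𝓝 0) := by
  refine squeeze_zero (g := fun N : ℕ => 2 / √(N : ℝ)) (fun N => by positivity) (fun N => ?_)
    (tendsto_const_nhds.div_atTop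
      (Real.tendsto_sqrt_atTop.comp tendsto_natCast_atTop_atTop))
  rcases N.eq_zero_or_pos with rfl | hN
  · simp
  rw [div_mul_eq_mul_div, div_le_div_iff₀ (by positivity) (by positivity), mul_assoc,
    Real.mul_self_sqrt N.cast_nonneg]
  linarith

lemma eventually_catalanThreshold_mul_le (v : ℝ) (hs : 0 < s) (d k : ℕ) :
    ∀ᶠ N : ℕ in atTop, ∀ j < k,
      catalanThreshold j * ((v * √(2 / (N + 1))) ^ 2 * √((d * N : ℕ) : ℝ)) ≤ s ^ 2 := by
  refine (eventually_all_finite (Set.finite_lt_nat k)).2 fun j _ => ?_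
  have hlim := tendsto_two_div_add_one_mul_sqrt.const_mul (catalanThreshold j * (v ^ 2 * √d))
  rw [mul_zero] at hlim
  filter_upwards [hlim.eventually_le_const (by positivity : 0 < s ^ 2)] with N hN
  refine le_trans (le_of_eq ?_) hN
  rw [mul_pow, Real.sq_sqrt (by positivity), Nat.cast_mul, Real.sqrt_mul d.cast_nonneg]
  ring

lemma isotropicFamily_one_wignerUnits [Fintype ν] [DecidableEq ν] [Nonempty ν] :
    IsotropicFamily (wignerUnits ν) 1 := by
  refine isotropicFamily_wignerUnits.mono (Real.sqrt_le_one.2 ?_)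
  rw [div_le_one (by positivity)]
  have : (1 : ℝ) ≤ Fintype.card ν := by exact_mod_cast Fintype.card_pos
  linarith

theorem trace_gaussianMoment_le [Nonempty m] (hA : CovarianceBound A v s) (hs : 0 < s) {q : ℕ}
    (hq : Even q) {t : ℝ} (hst : s ≤ t) (ht : ((q : ℝ) + 4) ^ 3 * (v * s) ^ 2 ≤ t ^ 4) :
    trace (gaussianMoment A (q + 4)) ≤
      2 * Fintype.card m * (Real.exp 8 * (3 * t)) ^ (q + 4) := by
  obtain ⟨k, hk⟩ : ∃ k, q + 4 = 2 * k := (hq.add (by decide : Even 4)).exists_two_nsmul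
  obtain ⟨N, hN, hN0⟩ := ((eventually_catalanThreshold_mul_le v hs (Fintype.card m) k).and
    (eventually_gt_atTop 0)).exists
  have : NeZero N := ⟨hN0.ne'⟩
  have hcomparison := trace_gaussianMoment_tensorFamily_le hA
    (isotropicFamily_diagonalUnits (ν := Fin N)) isotropicFamily_one_wignerUnits hq ht
  have hwigner := trace_gaussianMoment_le_eight_mul_sq_pow (k := k)
    (hA.tensorFamily (isotropicFamily_wignerUnits (ν := Fin N)).covarianceBound)
    (by rwa [mul_one]) (by simpa [Fintype.card_prod] using hN)
  have ht0 : 0 ≤ t := hs.le.trans hst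
  rw [trace_gaussianMoment_tensorFamily_diagonalUnits, Fintype.card_prod, Fintype.card_fin,
    Nat.cast_mul] at hcomparison
  rw [← hk, mul_one, Fintype.card_prod, Fintype.card_fin, Nat.cast_mul] at hwigner
  have hcatalan : (8 * s ^ 2) ^ k ≤ (3 * t) ^ (q + 4) := by
    rw [hk, pow_mul]
    gcongr
    nlinarith
  have hexp : Real.exp (8 * (q + 4)) = Real.exp 8 ^ (q + 4) := by
    rw [← Real.exp_nat_mul, mul_comm]
    push_cast
    rfl
  have hN' : (0 : ℝ) < N := by exact_mod_cast hN0
  refine le_of_mul_le_mul_left ?_ hN'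
  calc N * trace (gaussianMoment A (q + 4))
      ≤ Real.exp 8 ^ (q + 4) * (Fintype.card m * N * (3 * t) ^ (q + 4) +
          Fintype.card m * N * (3 * t) ^ (q + 4)) := by
        refine hcomparison.trans ?_
        rw [hexp]
        gcongr
        · exact hwigner.trans (by gcongr)
        · linarith
    _ = N * (2 * Fintype.card m * (Real.exp 8 * (3 * t)) ^ (q + 4)) := by
        rw [mul_pow]
        ring

end GaussianSeries

section NormBound

open Filter Topology

variable {ι m : Type*} [Fintype ι] [Fintype m] [DecidableEq m] {A : ι → Matrix m m ℝ} {v s : ℝ}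

lemma two_mul_le_exp_two_mul_ceil_log_add_four {d : ℝ} (hd : 0 < d) :
    2 * d ≤ Real.exp (2 * ⌈Real.log d⌉₊ + 4) := by
  have hceil := Nat.le_ceil (Real.log d)
  calc 2 * d ≤ Real.exp 1 * Real.exp (Real.log d) := by
        rw [Real.exp_log hd]
        gcongr
        linarith [Real.add_one_le_exp 1]
    _ ≤ Real.exp (2 * ⌈Real.log d⌉₊ + 4) := by
        rw [← Real.exp_add, Real.exp_le_exp]
        linarith [(⌈Real.log d⌉₊.cast_nonneg : (0 : ℝ) ≤ _)]

lemma two_mul_ceil_log_add_four_rpow_le {d : ℝ} (hd : 2 ≤ d) :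
    (2 * ⌈Real.log d⌉₊ + 4 : ℝ) ^ (3 / 4 : ℝ) ≤ 11 * Real.log d ^ (3 / 4 : ℝ) := by
  have hlog : Real.log 2 ≤ Real.log d := Real.log_le_log two_pos hd
  have hlog0 : 0 ≤ Real.log d := (Real.log_nonneg one_le_two).trans hlog
  have hceil := Nat.ceil_lt_add_one hlog0
  calc (2 * ⌈Real.log d⌉₊ + 4 : ℝ) ^ (3 / 4 : ℝ) ≤ (11 * Real.log d) ^ (3 / 4 : ℝ) := by
        gcongr
        linarith [Real.log_two_gt_d9]
    _ = 11 ^ (3 / 4 : ℝ) * Real.log d ^ (3 / 4 : ℝ) := Real.mul_rpow (by norm_num) hlog0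
    _ ≤ 11 * Real.log d ^ (3 / 4 : ℝ) := by
        gcongr
        exact Real.rpow_le_self_of_one_le (by norm_num) (by norm_num)

lemma rpow_three_quarters_mul_sqrt_pow_four {p x : ℝ} (hp : 0 ≤ p) (hx : 0 ≤ x) :
    (p ^ (3 / 4 : ℝ) * √x) ^ 4 = p ^ 3 * x ^ 2 := by
  rw [mul_pow, ← Real.rpow_mul_natCast hp, show √x ^ 4 = (√x ^ 2) ^ 2 by ring, Real.sq_sqrt hx]
  norm_num

lemma rpow_three_quarters_mul_sqrt_le {L : ℝ} (hL : 0 ≤ L) (hv : 0 ≤ v) (hs : 0 ≤ s) :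
    L ^ (3 / 4 : ℝ) * √(v * s) ≤ s + L ^ (3 / 2 : ℝ) * v := by
  have hsq : L ^ (3 / 4 : ℝ) * L ^ (3 / 4 : ℝ) = L ^ (3 / 2 : ℝ) := by
    rw [← Real.rpow_add_of_nonneg hL (by norm_num) (by norm_num)]
    norm_num
  refine abs_le_of_sq_le_sq' ?_ (by positivity) |>.2
  rw [mul_pow, Real.sq_sqrt (by positivity), sq, hsq]
  have hcross : 0 ≤ L ^ (3 / 2 : ℝ) * v * s := by positivity
  nlinarith [sq_nonneg s, sq_nonneg (L ^ (3 / 2 : ℝ) * v), hcross]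

lemma integral_norm_gaussianSeries_le_of_pos [Nonempty m] (hA : CovarianceBound A v s)
    (hs : 0 < s) : ∫ g, ‖gaussianSeries A g‖ ∂(gaussianProduct ι) ≤ 3 * Real.exp 9 *
      (s + (2 * ⌈Real.log (Fintype.card m)⌉₊ + 4 : ℝ) ^ (3 / 4 : ℝ) * √(v * s)) := by
  set q := 2 * ⌈Real.log (Fintype.card m)⌉₊ with hq
  have hq_even : Even q := even_two_mul _
  have hq_cast : (2 * ⌈Real.log (Fintype.card m)⌉₊ + 4 : ℝ) = q + 4 := by
    rw [hq]
    push_cast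
    rfl
  have hcard : 2 * (Fintype.card m : ℝ) ≤ Real.exp 1 ^ (q + 4) := by
    rw [← Real.exp_nat_mul, mul_one, Nat.cast_add, Nat.cast_ofNat, ← hq_cast]
    exact two_mul_le_exp_two_mul_ceil_log_add_four (by exact_mod_cast Fintype.card_pos)
  rw [hq_cast]
  set t := s + (q + 4 : ℝ) ^ (3 / 4 : ℝ) * √(v * s)
  have hst : s ≤ t := le_add_of_nonneg_right (by positivity)
  have ht : ((q : ℝ) + 4) ^ 3 * (v * s) ^ 2 ≤ t ^ 4 := by
    rw [← rpow_three_quarters_mul_sqrt_pow_four (by positivity) (mul_nonneg hA.v_nonneg hs.le)]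
    gcongr
    exact le_add_of_nonneg_left hs.le
  have : 0 ≤ t := hs.le.trans hst
  suffices hnorm : ∫ g, ‖gaussianSeries A g‖ ∂(gaussianProduct ι) ≤
      Real.exp 1 * (Real.exp 8 * (3 * t)) by
    refine hnorm.trans_eq ?_
    rw [← mul_assoc, ← Real.exp_add, mul_left_comm, mul_assoc]
    norm_num
  refine le_of_pow_le_pow_left₀ (n := q + 4) (by omega) (by positivity) ?_
  calc _ ≤ trace (gaussianMoment A (q + 4)) :=
        pow_integral_norm_gaussianSeries_le hA.isSymm (hq_even.add (by decide)) (by omega)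
    _ ≤ 2 * Fintype.card m * (Real.exp 8 * (3 * t)) ^ (q + 4) :=
        trace_gaussianMoment_le hA hs hq_even hst ht
    _ ≤ (Real.exp 1 * (Real.exp 8 * (3 * t))) ^ (q + 4) := by
        rw [mul_pow (Real.exp 1)]
        gcongr

theorem integral_norm_gaussianSeries_le (hA : CovarianceBound A v s) (hm : 2 ≤ Fintype.card m) :
    ∫ g, ‖gaussianSeries A g‖ ∂(gaussianProduct ι) ≤
      33 * Real.exp 9 * (s + Real.log (Fintype.card m) ^ (3 / 4 : ℝ) * √(v * s)) := by
  have : Nonempty m := Fintype.card_pos_iff.1 (two_pos.trans_le hm)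
  set p : ℝ := (2 * ⌈Real.log (Fintype.card m)⌉₊ + 4 : ℝ) ^ (3 / 4 : ℝ)
  have hcont : Continuous fun s' : ℝ => 3 * Real.exp 9 * (s' + p * √(v * s')) := by fun_prop
  have hbound : ∫ g, ‖gaussianSeries A g‖ ∂(gaussianProduct ι) ≤
      3 * Real.exp 9 * (s + p * √(v * s)) :=
    ge_of_tendsto (hcont.continuousWithinAt (s := Set.Ioi s))
      (eventually_mem_nhdsWithin.mono fun s' hs' => integral_norm_gaussianSeries_le_of_pos
        (hA.mono le_rfl (le_of_lt hs')) (hA.s_nonneg.trans_lt hs'))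
  calc _ ≤ 3 * Real.exp 9 * (s + p * √(v * s)) := hbound
    _ ≤ 3 * Real.exp 9 *
        (11 * s + 11 * Real.log (Fintype.card m) ^ (3 / 4 : ℝ) * √(v * s)) := by
        gcongr
        · linarith [hA.s_nonneg]
        · exact two_mul_ceil_log_add_four_rpow_le (by exact_mod_cast hm)
    _ = _ := by ring

lemma dotProduct_mulVec_self_le (M : Matrix m m ℝ) (x : m → ℝ) :
    x ⬝ᵥ (M *ᵥ x) ≤ ‖M‖ * (x ⬝ᵥ x) := by
  calc x ⬝ᵥ (M *ᵥ x) = inner ℝ (WithLp.toLp 2 (M *ᵥ x)) (WithLp.toLp 2 x) := by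
        rw [EuclideanSpace.inner_toLp_toLp, star_trivial]
    _ ≤ ‖WithLp.toLp 2 (M *ᵥ x)‖ * ‖WithLp.toLp 2 x‖ := real_inner_le_norm _ _
    _ ≤ ‖M‖ * ‖WithLp.toLp 2 x‖ * ‖WithLp.toLp 2 x‖ := by
        gcongr
        exact M.l2_opNorm_mulVec (WithLp.toLp 2 x)
    _ = ‖M‖ * (x ⬝ᵥ x) := by rw [mul_assoc, ← sq, norm_toLp_sq]

lemma sum_trace_mul_sq_eq_dotProduct_covX {n d : ℕ} {A : Fin n → Matrix (Fin d) (Fin d) ℝ}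
    (hA : ∀ i, (A i).IsSymm) (B : Matrix (Fin d) (Fin d) ℝ) :
    ∑ i, trace (A i * B) ^ 2 =
      (fun p : Fin d × Fin d => B p.1 p.2) ⬝ᵥ (covX A *ᵥ fun p => B p.1 p.2) := by
  have htrace (i : Fin n) : trace (A i * B) = ∑ p : Fin d × Fin d, A i p.1 p.2 * B p.1 p.2 := by
    simp only [trace, diag_apply, mul_apply, Fintype.sum_prod_type]
    rw [Finset.sum_comm]
    simp only [(hA i).apply]
  rw [covX, sum_mulVec, dotProduct_sum]
  refine Finset.sum_congr rfl fun i _ => ?_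
  rw [htrace, sq, Finset.sum_mul_sum]
  simp only [dotProduct, mulVec, of_apply, Finset.mul_sum]
  exact Finset.sum_congr rfl fun p _ => Finset.sum_congr rfl fun q _ => by ring

theorem covarianceBound_vX_sigmaX {n d : ℕ} {A : Fin n → Matrix (Fin d) (Fin d) ℝ}
    (hA : ∀ i, (A i).IsSymm) : CovarianceBound A (vX A) (sigmaX A) where
  isSymm := hA
  v_nonneg := Real.sqrt_nonneg _
  s_nonneg := Real.sqrt_nonneg _
  sum_trace_mul_sq_le B := by
    rw [sum_trace_mul_sq_eq_dotProduct_covX hA, vX, opNorm_eq_norm, Real.sq_sqrt (norm_nonneg _)]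
    refine (dotProduct_mulVec_self_le _ _).trans_eq ?_
    simp only [frobNormSq, dotProduct, Fintype.sum_prod_type, sq]
  sum_mulVec_dotProduct_self_le x := by
    rw [sum_mulVec_dotProduct_self hA, sigmaX, opNorm_eq_norm, Real.sq_sqrt (norm_nonneg _)]
    exact dotProduct_mulVec_self_le _ x

end NormBound

end MatrixConcentration

/-- **Theorem 2.1, "in particular" form.** There is a universal constant `C > 0` such
that for all positive integers `n` and `d ≥ 2` and symmetric matrices
`A 1, …, A n ∈ ℝ^{d×d}`, the Gaussian random matrix `X = ∑ g i • A i` satisfies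
`𝔼[‖X‖_op] ≤ C (σ(X) + (log d)^{3/2} v(X))`. -/
theorem bbvh_matrix_concentration_weak :
    ∃ C : ℝ, 0 < C ∧ ∀ (n d : ℕ), 0 < n → 2 ≤ d →
      ∀ A : Fin n → Matrix (Fin d) (Fin d) ℝ, (∀ i, (A i).IsSymm) →
        (∫ g, opNorm (∑ i, g i • A i) ∂(gaussianPi n)) ≤
          C * (sigmaX A + (Real.log d) ^ ((3 : ℝ) / 2) * vX A) := by
  refine ⟨66 * Real.exp 9, by positivity, fun n d _ hd A hA => ?_⟩
  have hcov := MatrixConcentration.covarianceBound_vX_sigmaX hA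
  have hbound := MatrixConcentration.integral_norm_gaussianSeries_le hcov
    (hd.trans_eq (Fintype.card_fin d).symm)
  rw [Fintype.card_fin] at hbound
  have hamgm := MatrixConcentration.rpow_three_quarters_mul_sqrt_le (Real.log_natCast_nonneg d)
    hcov.v_nonneg hcov.s_nonneg
  have hlog : 0 ≤ Real.log d ^ (3 / 2 : ℝ) * vX A :=
    mul_nonneg (Real.rpow_nonneg (Real.log_natCast_nonneg d) _) hcov.v_nonneg
  calc _ ≤ 33 * Real.exp 9 * (sigmaX A + Real.log d ^ (3 / 4 : ℝ) * √(vX A * sigmaX A)) := hbound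
    _ ≤ 33 * Real.exp 9 *
        (2 * (sigmaX A + Real.log d ^ (3 / 2 : ℝ) * vX A)) := by
        gcongr
        linarith
    _ = _ := by ring
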